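/- arXiv:1710.10838 — 2 statements merged into one kernel-verified Lean document; each statement's English description precedes it below -/
import Mathlib

section
/- If H is a finite group with a normal subgroup M ≠ 1 such that H/M ≅ A_k (the alternating group of degree k), k > 20, the extension 1 → M → H → A_k → 1 is nonsplit (no subgroup of H maps isomorphically onto A_k under the quotient map), and H embeds into a symmetric group S_ℓ, then ℓ ≥ k(k-1). -/
namespace NonsplitAux
open Equiv

theorem comm_threeCycle {α : Type*} [Fintype α] [DecidableEq α] (g h : Perm α) (δ : α) (hgδ : g δ ≠ δ) (hhδ : h δ ≠ δ)
    (hgh : ∀ x, x ≠ δ → g x = x ∨ h x = x) : (g * h * g⁻¹ * h⁻¹).IsThreeCycle := by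
  have key : g * h * g⁻¹ * h⁻¹ = swap δ (h δ) * swap δ (g δ) := by
    have e1 : h (g δ) = g δ := by
      rcases hgh (g δ) hgδ with h1 | h1
      · exact absurd (g.injective h1) hgδ
      · exact h1
    have e2 : g (h δ) = h δ := by
      rcases hgh (h δ) hhδ with h1 | h1
      · exact h1
      · exact absurd (h.injective h1) hhδ
    have hne : g δ ≠ h δ := by
      intro he
      rw [← he] at e2
      exact hgδ (g.injective e2)
    have e3 : ∀ x, x ≠ δ → h⁻¹ x ≠ δ → h x ≠ x → g x = x := fun x h1 _ h3 => by
      rcases hgh x h1 with h | h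
      · exact h
      · exact absurd h h3
    rw [mul_inv_eq_iff_eq_mul, mul_inv_eq_iff_eq_mul]
    ext x
    simp only [Perm.mul_apply]
    -- g (h x) = s (t (h (g x)))
    by_cases hx : x = δ
    · subst hx
      rw [e2, e1]
      rw [swap_apply_right, swap_apply_left]
    · by_cases hxg : g x = x
      · by_cases hxh : h x = δ
        · rw [hxg, hxh, swap_apply_left, swap_apply_of_ne_of_ne hgδ hne]
        · have : h x ≠ g δ := by
            intro he
            rw [← e1] at he
            have := h.injective he
            rw [this] at hxg
            exact hgδ (g.injective hxg)
          rw [hxg, swap_apply_of_ne_of_ne hxh this]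
          have h4 : h x ≠ h δ := fun he => hx (h.injective he)
          rw [swap_apply_of_ne_of_ne hxh h4]
          rcases hgh (h x) hxh with h5 | h5
          · exact h5
          · rw [h.injective h5, hxg]
      · have hxh : h x = x := (hgh x hx).resolve_left hxg
        rw [hxh]
        by_cases hgx : g x = δ
        · rw [hgx, swap_apply_of_ne_of_ne hhδ hne.symm, swap_apply_right]
        · have h6 : h (g x) = g x := by
            rcases hgh (g x) hgx with h5 | h5
            · exact absurd (g.injective h5) hxg
            · exact h5
          have h7 : g x ≠ g δ := fun he => hx (g.injective he)
          have h8 : g x ≠ h δ := by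
            intro he
            rw [← e2] at he
            have := g.injective he
            rw [this] at hxh
            exact hhδ (h.injective hxh)
          rw [h6, swap_apply_of_ne_of_ne hgx h7, swap_apply_of_ne_of_ne hgx h8]
  rw [key]
  apply Perm.isThreeCycle_swap_mul_swap_same hhδ.symm hgδ.symm
  intro he
  have := hgh (g δ) hgδ
  rcases this with h1 | h1
  · exact absurd (g.injective h1) hgδ
  · rw [← he] at h1
    exact hhδ (h.injective h1)

theorem bochert (k : ℕ) (G : Subgroup (Perm (Fin k))) (hi : G.index < Nat.factorial ((k+1)/2)) :
    ∃ g ∈ G, g.IsThreeCycle := by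
  classical
  let P : Finset (Fin k) → Prop := fun Δ => ∀ g ∈ G, (∀ x ∈ Δ, g x = x) → g = 1
  have huniv : P Finset.univ := fun g _ h => by ext x; simp [h x]
  obtain ⟨Δ, hΔ, hmin⟩ := Finset.exists_min_image (Finset.univ.filter P) Finset.card
    ⟨Finset.univ, by simpa using huniv⟩
  simp only [Finset.mem_filter, Finset.mem_univ, true_and] at hΔ hmin
  have hdk : Δ.card ≤ k := by simpa using Finset.card_le_univ Δ
  by_cases hd : Δ.card ≤ k / 2
  · exfalso
    have hinj : Function.Injective (fun (g : G) => (Function.Embedding.trans ⟨Subtype.val, Subtype.val_injective⟩ (g : Perm (Fin k)).toEmbedding : Δ ↪ Fin k)) := by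
      intro g h hgh
      have : (h⁻¹ * g : G) = 1 := by
        apply Subtype.ext
        apply hΔ _ (h⁻¹ * g).2
        intro x hx
        have := DFunLike.congr_fun hgh ⟨x, hx⟩
        simp at this
        simp [this]
      exact (inv_mul_eq_one.mp this).symm
    have hcard : Nat.card G ≤ k.descFactorial Δ.card := by
      have := Nat.card_le_card_of_injective _ hinj
      simpa [Nat.card_eq_fintype_card, Fintype.card_embedding_eq] using this
    have h1 : Nat.card G * G.index = k.factorial := by
      rw [Subgroup.card_mul_index]; simp [Nat.card_eq_fintype_card, Fintype.card_perm]
    have h2 := Nat.factorial_mul_descFactorial hdk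
    have h3 : Nat.factorial ((k+1)/2) ≤ Nat.factorial (k - Δ.card) := Nat.factorial_le (by omega)
    have h4 : 0 < k.descFactorial Δ.card := Nat.descFactorial_pos.mpr hdk
    nlinarith
  · push Not at hd
    have hcompl : ¬ P Δᶜ := fun h => by
      have := hmin _ h
      rw [Finset.card_compl] at this
      simp at this
      omega
    simp only [P] at hcompl
    push Not at hcompl
    obtain ⟨g, hg, hgf, hg1⟩ := hcompl
    obtain ⟨δ, hδ⟩ : ∃ δ, g δ ≠ δ := by
      by_contra! hh
      exact hg1 (by ext x; simp [hh x])
    have hδΔ : δ ∈ Δ := by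
      by_contra hh
      exact hδ (hgf δ (by simpa using hh))
    have her : ¬ P (Δ.erase δ) := fun h => by
      have := hmin _ h
      have := Finset.card_erase_lt_of_mem hδΔ
      omega
    simp only [P] at her
    push Not at her
    obtain ⟨h, hh, hhf, hh1⟩ := her
    refine ⟨g * h * g⁻¹ * h⁻¹, G.mul_mem (G.mul_mem (G.mul_mem hg hh) (G.inv_mem hg)) (G.inv_mem hh), ?_⟩
    apply comm_threeCycle g h δ hδ
    · intro hhδ
      apply hh1
      apply hΔ h hh
      intro x hx
      by_cases hxδ : x = δ
      · rw [hxδ, hhδ]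
      · exact hhf x (by simp [hx, hxδ])
    · intro x hx
      by_cases hxΔ : x ∈ Δ
      · right; exact hhf x (by simp [hx, hxΔ])
      · left; exact hgf x (by simpa using hxΔ)
open scoped Pointwise

theorem swap_aux {α : Type*} [DecidableEq α] (B : Set α) (x y z : α) (hx : x ∈ B) (hy : y ∈ B) :
    swap x y z ∈ B ↔ z ∈ B := by
  by_cases h1 : z = x
  · simp [h1, hx, hy]
  by_cases h2 : z = y
  · simp [h2, hx, hy]
  rw [swap_apply_of_ne_of_ne h1 h2]

theorem choose_ge (n r s : ℕ) (h1 : r ≤ s) (h2 : s + r ≤ n) : n.choose r ≤ n.choose s := by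
  have key : ∀ s, r ≤ s → s ≤ n / 2 → n.choose r ≤ n.choose s := by
    intro s hs
    induction s, hs using Nat.le_induction with
    | base => intro _; exact le_rfl
    | succ m hm ih =>
      intro h
      exact (ih (by omega)).trans (Nat.choose_le_succ_of_lt_half_left (by omega))
  by_cases hs : s ≤ n / 2
  · exact key s h1 hs
  · rw [← Nat.choose_symm (show s ≤ n by omega)]
    exact key _ (by omega) (by omega)

theorem index_setStab (k : ℕ) (B : Set (Fin k)) :
    (MulAction.stabilizer (Perm (Fin k)) B).index = k.choose B.ncard := by
  classical
  let s : Set.powersetCard (Fin k) B.ncard := ⟨B.toFinset, by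
    rw [Set.powersetCard.mem_iff, Set.ncard_eq_toFinset_card']⟩
  have h1 := Set.powersetCard.stabilizer_coe (G := Perm (Fin k)) s
  have h2 : MulAction.stabilizer (Perm (Fin k)) B = MulAction.stabilizer (Perm (Fin k)) s := by
    rw [h1]
    congr 1
    ext x
    simp [s]
  have := Set.powersetCard.isPretransitive (α := Fin k) (n := B.ncard)
  rw [h2, MulAction.index_stabilizer_of_transitive]
  rw [Set.powersetCard.card, Nat.card_fin]

theorem index_ge (k : ℕ) (K : Subgroup (Perm (Fin k))) (hA : K ≤ alternatingGroup (Fin k))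
    (B : Set (Fin k)) (hB : 2 ≤ B.ncard) (hK : K ≤ MulAction.stabilizer (Perm (Fin k)) B) :
    2 * k.choose B.ncard ≤ K.index := by
  rw [← Subgroup.relIndex_mul_index hK, index_setStab]
  apply Nat.mul_le_mul_right
  have h0 : K.relIndex (MulAction.stabilizer (Perm (Fin k)) B) ≠ 0 := by
    rw [Subgroup.relIndex]; exact Subgroup.index_ne_zero_of_finite
  have h1 : K.relIndex (MulAction.stabilizer (Perm (Fin k)) B) ≠ 1 := by
    intro h
    rw [Subgroup.relIndex_eq_one] at h
    obtain ⟨x, hx, y, hy, hxy⟩ := (Set.one_lt_ncard).mp (show 1 < B.ncard by omega)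
    have : swap x y ∈ MulAction.stabilizer (Perm (Fin k)) B := by
      rw [MulAction.mem_stabilizer_set]
      intro z
      exact swap_aux B x y z hx hy
    have := hA (h this)
    rw [Perm.mem_alternatingGroup, Perm.sign_swap hxy] at this
    exact absurd this (by decide)
  omega
theorem threeCycle_facts {α : Type*} [Fintype α] [DecidableEq α] {g : Perm α} (hg : g.IsThreeCycle)
    {x : α} (hx : g x ≠ x) :
    g (g (g x)) = x ∧ g (g x) ≠ x ∧ ∀ y, g y ≠ y → y = x ∨ y = g x ∨ y = g (g x) := by
  have h3 : g (g (g x)) = x := by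
    have h := pow_orderOf_eq_one g
    rw [hg.orderOf] at h
    have := DFunLike.congr_fun h x
    simpa [pow_succ] using this
  have h2 : g (g x) ≠ x := by
    intro h
    rw [h] at h3
    exact hx h3
  refine ⟨h3, h2, ?_⟩
  have hsub : ({x, g x, g (g x)} : Finset α) ⊆ g.support := by
    intro y hy
    simp only [Finset.mem_insert, Finset.mem_singleton] at hy
    rw [Perm.mem_support]
    rcases hy with rfl | rfl | rfl
    · exact hx
    · exact fun h => hx (g.injective h)
    · exact fun h => hx (g.injective (g.injective h))
  have hcard : ({x, g x, g (g x)} : Finset α).card = 3 := by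
    rw [Finset.card_eq_three]
    exact ⟨x, g x, g (g x), hx.symm, h2.symm, fun h => hx (g.injective h).symm, rfl⟩
  have heq := Finset.eq_of_subset_of_card_le hsub (by rw [hcard, hg.card_support])
  intro y hy
  rw [← Perm.mem_support, ← heq] at hy
  simpa using hy

theorem block_threeCycle {α : Type*} [Fintype α] [DecidableEq α] (G : Subgroup (Perm α)) (B : Set α)
    (hB : MulAction.IsBlock G B) {g : Perm α} (hgG : g ∈ G) (hg : g.IsThreeCycle) {x x' : α}
    (hx : x ∈ B) (hx' : x' ∈ B) (hne : x' ≠ x) (hgx : g x ≠ x) : g x ∈ B ∧ g (g x) ∈ B := by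
  obtain ⟨h3, h2, hs⟩ := threeCycle_facts hg hgx
  have hmem : ∀ y ∈ B, g y ∈ (⟨g, hgG⟩ : G) • B := fun y hy => ⟨y, hy, rfl⟩
  have hmeet : ∃ z, z ∈ B ∧ z ∈ (⟨g, hgG⟩ : G) • B := by
    by_cases h : g x' = x'
    · exact ⟨x', hx', by have := hmem x' hx'; rwa [h] at this⟩
    · rcases hs x' h with h | h | h
      · exact absurd h hne
      · exact ⟨g x, h ▸ hx', hmem x hx⟩
      · refine ⟨x, hx, ?_⟩
        have := hmem x' hx'
        rwa [h, h3] at this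
  have heq : (⟨g, hgG⟩ : G) • B = B := by
    rcases (MulAction.isBlock_iff_smul_eq_or_disjoint.mp hB) ⟨g, hgG⟩ with h | h
    · exact h
    · obtain ⟨z, hz1, hz2⟩ := hmeet
      exact absurd hz1 (Set.disjoint_left.mp h hz2)
  rw [heq] at hmem
  exact ⟨hmem x hx, hmem _ (hmem x hx)⟩

theorem classify (k : ℕ) (hk : 20 < k) (G : Subgroup (Perm (Fin k)))
    (hA : G ≤ alternatingGroup (Fin k)) (hi : G.index < k * (k - 1))
    (hfix : ∀ i, ∃ g ∈ G, g i ≠ i) : alternatingGroup (Fin k) ≤ G := by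
  classical
  have hfact : k * (k - 1) ≤ Nat.factorial ((k + 1) / 2) := by
    obtain ⟨n, hn⟩ : ∃ n, (k + 1) / 2 = n + 3 := ⟨(k+1)/2 - 3, by omega⟩
    rw [hn, Nat.factorial_succ, Nat.factorial_succ, Nat.factorial_succ]
    have h1 : 1 ≤ n.factorial := Nat.factorial_pos n
    have h2 : k ≤ 2 * (n + 3) := by omega
    have h3 : k - 1 ≤ 2 * (n + 3) := by omega
    have h4 : 8 ≤ n := by omega
    calc k * (k - 1) ≤ (2 * (n + 3)) * (2 * (n + 3)) := Nat.mul_le_mul h2 h3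
      _ ≤ (n + 2 + 1) * ((n + 1 + 1) * ((n + 1) * 1)) := by nlinarith
      _ ≤ _ := by gcongr
  obtain ⟨g, hgG, hg⟩ := bochert k G (by omega)
  have hch2 : k * (k - 1) = 2 * k.choose 2 := by
    have := Nat.descFactorial_eq_factorial_mul_choose k 2
    obtain ⟨n, rfl⟩ : ∃ n, k = n + 2 := ⟨k - 2, by omega⟩
    simp [Nat.descFactorial] at this ⊢
    linarith
  have htrans : MulAction.IsPretransitive G (Fin k) := by
    by_contra hnt
    obtain ⟨x, y, hxy⟩ : ∃ x y : Fin k, ∀ g : G, g • x ≠ y := by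
      by_contra! h
      exact hnt ⟨h⟩
    have hinv : ∀ g ∈ G, ∀ z, g z ∈ MulAction.orbit G x ↔ z ∈ MulAction.orbit G x := by
      intro g hg z
      constructor
      · rintro ⟨u, hu⟩
        refine ⟨(⟨g, hg⟩ : G)⁻¹ * u, ?_⟩
        change (⟨g, hg⟩ : G)⁻¹ • (u • x) = z
        rw [inv_smul_eq_iff]
        exact hu
      · rintro ⟨u, hu⟩
        refine ⟨(⟨g, hg⟩ : G) * u, ?_⟩
        change (⟨g, hg⟩ : G) • (u • x) = g z
        exact congrArg g hu
    have h2 : 2 ≤ (MulAction.orbit G x).ncard := by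
      obtain ⟨g, hg, hgx⟩ := hfix x
      refine (Set.one_lt_ncard).mpr ⟨x, MulAction.mem_orbit_self x, g x, ?_, hgx.symm⟩
      exact (hinv g hg x).mpr (MulAction.mem_orbit_self x)
    have h2' : 2 ≤ ((MulAction.orbit G x)ᶜ).ncard := by
      obtain ⟨g, hg, hgx⟩ := hfix y
      have hy : y ∉ MulAction.orbit G x := fun ⟨g, h⟩ => hxy g h
      refine (Set.one_lt_ncard).mpr ⟨y, hy, g y, ?_, hgx.symm⟩
      exact fun h => hy ((hinv g hg y).mp h)
    have hsum := Set.ncard_add_ncard_compl (MulAction.orbit G x)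
    rw [Nat.card_fin] at hsum
    have h3 := index_ge k G hA (MulAction.orbit G x) h2 (by
      intro g hg
      rw [MulAction.mem_stabilizer_set]
      exact hinv g hg)
    have h4 := choose_ge k 2 (MulAction.orbit G x).ncard h2 (by omega)
    omega
  have hprim : MulAction.IsPreprimitive G (Fin k) := by
    refine ⟨fun {B} hB => ?_⟩
    by_contra hnt
    simp only [MulAction.IsTrivialBlock, not_or, Set.not_subsingleton_iff] at hnt
    obtain ⟨⟨x, hx, y, hy, hxy⟩, hBu⟩ := hnt
    have hmul := hB.ncard_block_mul_ncard_orbit_eq ⟨x, hx⟩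
    rw [Nat.card_fin] at hmul
    have ha2 : 2 ≤ B.ncard := (Set.one_lt_ncard).mpr ⟨x, hx, y, hy, hxy⟩
    have hb2 : 2 * B.ncard ≤ k := by
      by_contra! h
      exact hBu (hB.eq_univ_of_card_lt (by rw [Nat.card_fin]; omega))
    set a := B.ncard with ha
    set b := (MulAction.orbit G B).ncard with hb
    let K : Subgroup (Perm (Fin k)) := G ⊓ MulAction.stabilizer (Perm (Fin k)) B
    have hKindex : b * G.index = K.index := by
      rw [← Subgroup.relIndex_mul_index (show K ≤ G from inf_le_left)]
      congr 1
      rw [hb, ← MulAction.index_stabilizer, Subgroup.relIndex]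
      congr 1
      ext g
      simp only [K, Subgroup.mem_subgroupOf, Subgroup.mem_inf, MulAction.mem_stabilizer_set]
      exact ⟨fun h => ⟨g.2, h⟩, fun h => h.2⟩
    have hchoose : k * (k-1).choose (a - 1) = a * k.choose a := by
      have := Nat.add_one_mul_choose_eq (k - 1) (a - 1)
      rw [show k - 1 + 1 = k by omega, show a - 1 + 1 = a by omega] at this
      linarith
    have hKle := index_ge k K (inf_le_left.trans hA) B ha2 inf_le_right
    have hapos : 0 < a := by omega
    have hbpos : 0 < b := by
      rcases Nat.eq_zero_or_pos b with h | h
      · rw [h] at hmul; omega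
      · exact h
    have hbound : ∀ c, c * k.choose a ≤ K.index → c * (k-1).choose (a - 1) ≤ G.index := by
      intro c hc
      rw [← hKindex] at hc
      have : k * (c * (k-1).choose (a-1)) ≤ k * G.index := by
        calc k * (c * (k-1).choose (a-1)) = a * (c * k.choose a) := by
              rw [← mul_assoc, mul_comm k c, mul_assoc, hchoose]; ring
          _ ≤ a * (b * G.index) := Nat.mul_le_mul_left a hc
          _ = (a * b) * G.index := by ring
          _ = k * G.index := congrArg (· * G.index) hmul
      exact Nat.le_of_mul_le_mul_left this (by omega)
    -- a translate of B through any point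
    have htr : ∀ z : Fin k, ∃ h : G, z ∈ h • B := by
      intro z
      obtain ⟨h, hh⟩ := MulAction.exists_smul_eq G x z
      exact ⟨h, x, hx, hh⟩
    have hcardtr : ∀ h : G, (h • B).ncard = a := fun h => Set.ncard_smul_set h B
    rcases (show a = 2 ∨ a = 3 ∨ 4 ≤ a by omega) with h | h | h
    · obtain ⟨z, hz⟩ : ∃ z, g z ≠ z := by
        by_contra! hh
        exact hg.ne_one (by ext x; simp [hh x])
      obtain ⟨u, hu⟩ := htr z
      obtain ⟨z', hz', hzz'⟩ := Set.exists_ne_of_one_lt_ncard (show 1 < (u • B).ncard by rw [hcardtr]; omega) z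
      obtain ⟨h1, h2⟩ := block_threeCycle G (u • B) (hB.translate u) hgG hg hu hz' hzz' hz
      obtain ⟨h3, h4, -⟩ := threeCycle_facts hg hz
      have : 2 < (u • B).ncard := by
        rw [Set.two_lt_ncard]
        exact ⟨z, hu, g z, h1, g (g z), h2, hz.symm, h4.symm, fun h => hz (g.injective h).symm⟩
      rw [hcardtr] at this
      omega
    · have h4 : 4 * k.choose a ≤ K.index := by
        let S := MulAction.stabilizer (Perm (Fin k)) B
        let SA := S ⊓ alternatingGroup (Fin k)
        have hSA := index_ge k SA inf_le_right B ha2 inf_le_left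
        have hK1 : K ≤ SA := fun g hg => ⟨hg.2, hA hg.1⟩
        rw [← Subgroup.relIndex_mul_index hK1]
        have h0 : K.relIndex SA ≠ 0 := by
          rw [Subgroup.relIndex]; exact Subgroup.index_ne_zero_of_finite
        have h1 : K.relIndex SA ≠ 1 := by
          intro h1
          rw [Subgroup.relIndex_eq_one] at h1
          obtain ⟨w, hw⟩ : ∃ w, w ∉ B := by
            by_contra! hh
            exact hBu (Set.eq_univ_of_forall hh)
          obtain ⟨u, hu⟩ := htr w
          have hdisj : Disjoint (u • B) B := by
            rcases (MulAction.isBlock_iff_smul_eq_or_disjoint.mp hB) u with h | h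
            · exact absurd (h ▸ hu) hw
            · exact h
          obtain ⟨w', hw', hww'⟩ := Set.exists_ne_of_one_lt_ncard (show 1 < (u • B).ncard by rw [hcardtr]; omega) w
          obtain ⟨z, hz⟩ : ∃ z, z ∉ u • B ∪ B := by
            by_contra! hh
            have h5 := Set.ncard_union_le (u • B) B
            rw [Set.eq_univ_of_forall hh, Set.ncard_univ, Nat.card_fin, hcardtr] at h5
            omega
          have hzu : z ∉ u • B := fun h => hz (Or.inl h)
          have hzB : z ∉ B := fun h => hz (Or.inr h)
          have hwz : w ≠ z := fun h => hzu (h ▸ hu)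
          have hwz' : w' ≠ z := fun h => hzu (h ▸ hw')
          have hc := Perm.isThreeCycle_swap_mul_swap_same hww'.symm hwz hwz'
          have hcw : (swap w w' * swap w z) w = z := by
            rw [Perm.mul_apply, swap_apply_left, swap_apply_of_ne_of_ne hwz.symm hwz'.symm]
          have hcS : (swap w w' * swap w z) ∈ SA := by
            refine ⟨?_, hc.mem_alternatingGroup⟩
            change _ ∈ MulAction.stabilizer (Perm (Fin k)) B
            rw [← _root_.stabilizer_compl, MulAction.mem_stabilizer_set]
            intro t
            rw [Perm.smul_def, Perm.mul_apply]
            have m1 : w' ∈ Bᶜ := fun h => (Set.disjoint_left.mp hdisj hw') h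
            rw [swap_aux Bᶜ w w' _ hw m1, swap_aux Bᶜ w z _ hw hzB]
          have hcG := (h1 hcS).1
          have := (block_threeCycle G (u • B) (hB.translate u) hcG hc hu hw' hww' (by rw [hcw]; exact hwz.symm)).1
          rw [hcw] at this
          exact hzu this
        have : 2 ≤ K.relIndex SA := by omega
        calc 4 * k.choose a = 2 * (2 * k.choose a) := by ring
          _ ≤ _ := Nat.mul_le_mul this hSA
      have h5 := hbound 4 h4
      rw [h] at h5
      have := Nat.descFactorial_eq_factorial_mul_choose (k-1) 2
      obtain ⟨n, rfl⟩ : ∃ n, k = n + 3 := ⟨k - 3, by omega⟩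
      simp [Nat.descFactorial] at this h5 hi
      nlinarith
    · have h5 := hbound 2 hKle
      have h6 := choose_ge (k-1) 3 (a-1) (by omega) (by omega)
      have := Nat.descFactorial_eq_factorial_mul_choose (k-1) 3
      obtain ⟨n, rfl⟩ : ∃ n, k = n + 4 := ⟨k - 4, by omega⟩
      simp [Nat.descFactorial, Nat.factorial] at this h5 h6 hi
      have : (n+4)*(n+3) ≤ 2 * (n+3).choose 3 := by nlinarith
      omega
  exact Equiv.Perm.alternatingGroup_le_of_isPreprimitive_of_isThreeCycle_mem hprim hg hgG
theorem alt_three_trans (k : ℕ) (hk : 20 < k) {a b c a' b' c' : Fin k} (hab : a ≠ b) (hac : a ≠ c)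
    (hbc : b ≠ c) (hab' : a' ≠ b') (hac' : a' ≠ c') (hbc' : b' ≠ c') :
    ∃ σ : alternatingGroup (Fin k), (σ : Perm (Fin k)) a = a' ∧ (σ : Perm (Fin k)) b = b' ∧
      (σ : Perm (Fin k)) c = c' := by
  have h1 := alternatingGroup.isMultiplyPretransitive (Fin k)
  rw [Nat.card_fin] at h1
  have h3 : MulAction.IsMultiplyPretransitive (alternatingGroup (Fin k)) (Fin k) 3 :=
    MulAction.isMultiplyPretransitive_of_le (n := k - 2) (by omega) (by simp)
  have hi : ∀ {a b c : Fin k}, a ≠ b → a ≠ c → b ≠ c → Function.Injective ![a, b, c] := by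
    intro a b c h1 h2 h3 x y h
    fin_cases x <;> fin_cases y <;> simp_all
  obtain ⟨σ, hσ⟩ := MulAction.exists_smul_eq (alternatingGroup (Fin k))
    (⟨![a, b, c], hi hab hac hbc⟩ : Fin 3 ↪ Fin k) ⟨![a', b', c'], hi hab' hac' hbc'⟩
  refine ⟨σ, ?_, ?_, ?_⟩
  · exact DFunLike.congr_fun hσ 0
  · exact DFunLike.congr_fun hσ 1
  · exact DFunLike.congr_fun hσ 2

theorem exists_third (k : ℕ) (hk : 20 < k) (s : Finset (Fin k)) (hs : s.card < 21) : ∃ x, x ∉ s := by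
  by_contra! h
  have := Finset.eq_univ_iff_forall.mpr h
  rw [this] at hs
  simp at hs
  omega

theorem alt_two_trans (k : ℕ) (hk : 20 < k) {a b a' b' : Fin k} (hab : a ≠ b) 
    (hab' : a' ≠ b') :
    ∃ σ : alternatingGroup (Fin k), (σ : Perm (Fin k)) a = a' ∧ (σ : Perm (Fin k)) b = b' := by
  obtain ⟨c, hc⟩ := exists_third k hk {a, b} (by have := Finset.card_le_two (a := a) (b := b); omega)
  obtain ⟨c', hc'⟩ := exists_third k hk {a', b'} (by have := Finset.card_le_two (a := a') (b := b'); omega)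
  simp only [Finset.mem_insert, Finset.mem_singleton, not_or] at hc hc'
  obtain ⟨σ, h1, h2, -⟩ := alt_three_trans k hk hab (Ne.symm hc.1) (Ne.symm hc.2) hab' (Ne.symm hc'.1) (Ne.symm hc'.2)
  exact ⟨σ, h1, h2⟩

theorem submodule_lemma (k : ℕ) (hk : 20 < k) (p : ℕ) [Fact p.Prime] (W : AddSubgroup (Fin k → ZMod p))
    (hW : ∀ v ∈ W, ∀ σ : alternatingGroup (Fin k), (fun x => v ((σ : Perm (Fin k)) x)) ∈ W)
    (v : Fin k → ZMod p) (hv : v ∈ W) (i j : Fin k) (hij : v i ≠ v j)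
    (w : Fin k → ZMod p) (hw : ∑ x, w x = 0) : w ∈ W := by
  have hij' : i ≠ j := fun h => hij (by rw [h])
  obtain ⟨m, hm⟩ := exists_third k hk {i, j} (lt_of_le_of_lt Finset.card_le_two (by omega))
  obtain ⟨n, hn⟩ := exists_third k hk {i, j, m} (lt_of_le_of_lt Finset.card_le_three (by omega))
  obtain ⟨r, hr⟩ := exists_third k hk {i, j, m, n} (lt_of_le_of_lt Finset.card_le_four (by omega))
  obtain ⟨s, hs⟩ := exists_third k hk {i, j, m, n, r} (lt_of_le_of_lt Finset.card_le_five (by omega))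
  simp only [Finset.mem_insert, Finset.mem_singleton, not_or] at hm hn hr hs
  obtain ⟨hmi, hmj⟩ := hm
  obtain ⟨hni, hnj, hnm⟩ := hn
  obtain ⟨hri, hrj, hrm, hrn⟩ := hr
  obtain ⟨hsi, hsj, hsm, hsn, hsr⟩ := hs
  let τ : alternatingGroup (Fin k) := ⟨swap i j * swap m n, by
    rw [Perm.mem_alternatingGroup, Perm.sign_mul, Perm.sign_swap hij', Perm.sign_swap (Ne.symm hnm)]; decide⟩
  let σ : alternatingGroup (Fin k) := ⟨swap i s * swap i r, by
    rw [Perm.mem_alternatingGroup, Perm.sign_mul, Perm.sign_swap (Ne.symm hsi), Perm.sign_swap (Ne.symm hri)]; decide⟩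
  let u : Fin k → ZMod p := v - fun x => v ((τ : Perm (Fin k)) x)
  have hu : u ∈ W := W.sub_mem hv (hW v hv τ)
  have hui : u i = v i - v j := by
    simp only [u, τ, Pi.sub_apply, Perm.mul_apply]
    rw [swap_apply_of_ne_of_ne (Ne.symm hmi) (Ne.symm hni), swap_apply_left]
  have hur : u r = 0 := by
    simp only [u, τ, Pi.sub_apply, Perm.mul_apply]
    rw [swap_apply_of_ne_of_ne hrm hrn, swap_apply_of_ne_of_ne hri hrj, sub_self]
  have hus : u s = 0 := by
    simp only [u, τ, Pi.sub_apply, Perm.mul_apply]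
    rw [swap_apply_of_ne_of_ne hsm hsn, swap_apply_of_ne_of_ne hsi hsj, sub_self]
  have ht : (u - fun x => u ((σ : Perm (Fin k)) x)) ∈ W := W.sub_mem hu (hW u hu σ)
  have ht' : (u - fun x => u ((σ : Perm (Fin k)) x)) = (v i - v j) • (Pi.single i 1 - Pi.single s 1) := by
    ext x
    simp only [σ, Pi.sub_apply, Perm.mul_apply, Pi.smul_apply, smul_eq_mul]
    by_cases hxi : x = i
    · subst hxi
      rw [swap_apply_left, swap_apply_of_ne_of_ne hri (Ne.symm hsr), hur, hui]
      simp [Ne.symm hsi]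
    · by_cases hxr : x = r
      · subst hxr
        rw [swap_apply_right, swap_apply_left, hur, hus]
        simp [hri, Ne.symm hsr]
      · rw [swap_apply_of_ne_of_ne hxi hxr]
        by_cases hxs : x = s
        · subst hxs
          rw [swap_apply_right, hus, hui]
          simp [hxi]
        · rw [swap_apply_of_ne_of_ne hxi hxs]
          simp [hxi, hxs]
  rw [ht'] at ht
  have hbase : (Pi.single i 1 - Pi.single s 1 : Fin k → ZMod p) ∈ W := by
    have := ZMod.smul_mem ht (v i - v j)⁻¹
    rwa [smul_smul, inv_mul_cancel₀ (sub_ne_zero.mpr hij), one_smul] at this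
  have hall : ∀ x y : Fin k, ∀ b : ZMod p, (Pi.single x b - Pi.single y b : Fin k → ZMod p) ∈ W := by
    intro x y b
    by_cases hxy : x = y
    · rw [hxy, sub_self]; exact W.zero_mem
    · obtain ⟨ρ, h1, h2⟩ := alt_two_trans k hk hxy (Ne.symm hsi)
      have := ZMod.smul_mem (hW _ hbase ρ) b
      convert this using 1
      ext z
      simp only [Pi.sub_apply, Pi.smul_apply, smul_eq_mul, Pi.single_apply]
      rw [← h1, ← h2]
      simp only [EmbeddingLike.apply_eq_iff_eq]
      split_ifs <;> simp
  have hsum : w = ∑ x, (Pi.single x (w x) - Pi.single i (w x)) := by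
    rw [Finset.sum_sub_distrib, Finset.univ_sum_single]
    have : ∑ x, (Pi.single i (w x) : Fin k → ZMod p) = Pi.single i (∑ x, w x) := by
      ext z
      simp only [Finset.sum_apply, Pi.single_apply]
      split_ifs <;> simp
    rw [this, hw]
    simp
  rw [hsum]
  exact W.sum_mem fun x _ => hall _ _ _
theorem perfect_lemma (k : ℕ) (hk : 20 < k) {H : Type*} [Group H] (π : H →* alternatingGroup (Fin k))
    (p : ℕ) (s : Finset (Fin k)) (hs : 5 ≤ s.card)
    (ψ : H → ZMod p)
    (hψ : ∀ g h, ((π g : Perm (Fin k)).support ⊆ s) → ((π h : Perm (Fin k)).support ⊆ s) →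
      ψ (g * h) = ψ g + ψ h)
    (hπ : Function.Surjective π)
    (hker : ∀ h, π h = 1 → ψ h = 0) (h : H) (hh : (π h : Perm (Fin k)).support ⊆ s) : ψ h = 0 := by
  let R := (alternatingGroup.ofSubtype s).range
  let S : Subgroup H := R.comap π
  have hS : ∀ g, g ∈ S ↔ (π g : Perm (Fin k)).support ⊆ s := fun g =>
    alternatingGroup.mem_range_ofSubtype_iff s (π g)
  have h1 : ψ 1 = 0 := hker 1 (map_one π)
  have hinv : ∀ g ∈ S, ψ g⁻¹ = - ψ g := by
    intro g hg
    have := hψ g⁻¹ g ((hS _).mp (S.inv_mem hg)) ((hS _).mp hg)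
    rw [inv_mul_cancel, h1] at this
    exact eq_neg_of_add_eq_zero_left this.symm
  let K : Subgroup H :=
    { carrier := {g | g ∈ S ∧ ψ g = 0}
      mul_mem' := by
        rintro a b ⟨ha, ha'⟩ ⟨hb, hb'⟩
        refine ⟨S.mul_mem ha hb, ?_⟩
        rw [hψ a b ((hS _).mp ha) ((hS _).mp hb), ha', hb', add_zero]
      one_mem' := ⟨S.one_mem, h1⟩
      inv_mem' := by
        rintro a ⟨ha, ha'⟩
        refine ⟨S.inv_mem ha, ?_⟩
        rw [hinv a ha, ha', neg_zero] }
  have hK : ⁅S, S⁆ ≤ K := by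
    rw [Subgroup.commutator_le]
    intro a ha b hb
    have ha' := S.inv_mem ha
    have hb' := S.inv_mem hb
    have m1 := S.mul_mem ha hb
    have m2 := S.mul_mem m1 ha'
    refine ⟨S.mul_mem m2 hb', ?_⟩
    rw [commutatorElement_def, hψ _ _ ((hS _).mp m2) ((hS _).mp hb'),
      hψ _ _ ((hS _).mp m1) ((hS _).mp ha'), hψ _ _ ((hS _).mp ha) ((hS _).mp hb), hinv a ha, hinv b hb]
    ring
  have hmap : Subgroup.map π ⁅S, S⁆ = R := by
    rw [Subgroup.map_commutator, Subgroup.map_comap_eq_self_of_surjective hπ]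
    have := map_commutator_eq (alternatingGroup s) (alternatingGroup.ofSubtype s)
    rw [commutator_alternatingGroup_eq_top (by simpa using hs), ← MonoidHom.range_eq_map] at this
    exact this.symm
  have hhS := (hS h).mpr hh
  obtain ⟨q, hq, hqh⟩ : π h ∈ Subgroup.map π ⁅S, S⁆ := by rw [hmap]; exact hhS
  obtain ⟨hqS, hq0⟩ := hK hq
  have hd : π (q⁻¹ * h) = 1 := by rw [map_mul, map_inv, hqh, inv_mul_cancel]
  have := hψ q (q⁻¹ * h) ((hS _).mp hqS) (by rw [hd]; simp)
  rw [mul_inv_cancel_left, hq0, hker _ hd, add_zero] at this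
  exact this

theorem min_perfect (k : ℕ) (hk : 20 < k) {H : Type*} [Group H] (π : H →* alternatingGroup (Fin k))
    (hπ : Function.Surjective π) (hmin : ∀ X : Subgroup H, X.map π = ⊤ → X = ⊤)
    (p : ℕ) (ψ : H → ZMod p) (hψ : ∀ g h, ψ (g * h) = ψ g + ψ h) (h : H) : ψ h = 0 := by
  have hcomm : commutator H = ⊤ := by
    apply hmin
    rw [map_commutator_eq, MonoidHom.range_eq_top.mpr hπ, ← commutator_def]
    exact commutator_alternatingGroup_eq_top (by simp; omega)
  let Ψ : H →* Multiplicative (ZMod p) := MonoidHom.mk' (fun h => Multiplicative.ofAdd (ψ h))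
    (fun a b => by rw [hψ, ofAdd_add])
  have := Abelianization.commutator_subset_ker Ψ
  rw [hcomm] at this
  have h2 : Ψ h = 1 := this (Subgroup.mem_top h)
  exact h2

theorem cocycle_contra (k : ℕ) (hk : 20 < k) {H : Type*} [Group H] (π : H →* alternatingGroup (Fin k))
    (hπ : Function.Surjective π) (hmin : ∀ X : Subgroup H, X.map π = ⊤ → X = ⊤)
    (p : ℕ) [Fact p.Prime] (c : H → Fin k → ZMod p)
    (hc : ∀ g h i, c (g * h) i = c g ((π h : Perm (Fin k)) i) + c h i)
    (m0 : H) (hm0 : π m0 = 1) (i0 : Fin k) (hne : c m0 i0 ≠ 0) : False := by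
  have hc1 : ∀ i, c 1 i = 0 := by
    intro i
    have := hc 1 1 i
    simpa using this
  have hcinv : ∀ h i, c h⁻¹ ((π h : Perm (Fin k)) i) = - c h i := by
    intro h i
    have := hc h⁻¹ h i
    rw [inv_mul_cancel, hc1] at this
    exact eq_neg_of_add_eq_zero_left this.symm
  have hcr : ∀ g m i, π m = 1 → c (g * m) i = c g i + c m i := by
    intro g m i hm
    rw [hc, hm]; simp
  by_cases hcase : ∃ m, π m = 1 ∧ ∃ i j, c m i ≠ c m j
  · obtain ⟨m, hm, i, j, hij⟩ := hcase
    let W : AddSubgroup (Fin k → ZMod p) :=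
      { carrier := {v | ∃ m, π m = 1 ∧ c m = v}
        add_mem' := by
          rintro _ _ ⟨a, ha, rfl⟩ ⟨b, hb, rfl⟩
          refine ⟨a * b, by rw [map_mul, ha, hb, one_mul], ?_⟩
          ext i
          exact hcr a b i hb
        zero_mem' := ⟨1, map_one π, by ext i; exact hc1 i⟩
        neg_mem' := by
          rintro _ ⟨a, ha, rfl⟩
          refine ⟨a⁻¹, by rw [map_inv, ha, inv_one], ?_⟩
          ext i
          have := hcinv a i
          rw [ha] at this
          simpa using this }
    have hW : ∀ v ∈ W, ∀ σ : alternatingGroup (Fin k), (fun x => v ((σ : Perm (Fin k)) x)) ∈ W := by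
      rintro _ ⟨a, ha, rfl⟩ σ
      obtain ⟨h, rfl⟩ := hπ σ
      refine ⟨h⁻¹ * a * h, by simp [ha], ?_⟩
      ext i
      rw [hc, hcr _ _ _ ha, hcinv]
      ring
    have hsum : ∀ h, ∑ x, c h x = 0 := by
      apply min_perfect k hk π hπ hmin p
      intro g h
      simp only [hc, Finset.sum_add_distrib]
      congr 1
      exact Equiv.sum_comp (π h : Perm (Fin k)) (c g)
    let K : Subgroup H :=
      { carrier := {h | ∀ i, c h i = 0}
        mul_mem' := by
          intro a b ha hb i
          rw [hc, ha, hb, add_zero]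
        one_mem' := hc1
        inv_mem' := by
          intro a ha i
          have := hcinv a ((π a : Perm (Fin k)).symm i)
          rw [Equiv.apply_symm_apply] at this
          rw [this, ha, neg_zero] }
    have hK : K = ⊤ := by
      apply hmin
      rw [eq_top_iff]
      intro σ _
      obtain ⟨h, rfl⟩ := hπ σ
      obtain ⟨m', hm', hcm'⟩ : (- c h) ∈ W := W.neg_mem
        (submodule_lemma k hk p W hW (c m) ⟨m, hm, rfl⟩ i j hij (c h) (hsum h))
      refine ⟨h * m', ?_, by rw [map_mul, hm', mul_one]⟩
      intro i
      rw [hcr _ _ _ hm', hcm']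
      simp
    have : m0 ∈ K := by rw [hK]; exact Subgroup.mem_top _
    exact hne (this i0)
  · push Not at hcase
    -- constant case
    have hD : ∀ h i j, (π h : Perm (Fin k)) i = i → (π h : Perm (Fin k)) j = j → c h i - c h j = 0 := by
      intro h i j hi hj
      refine perfect_lemma k hk π p ({i, j}ᶜ) ?_ (fun h => c h i - c h j) ?_ hπ ?_ h ?_
      · rw [Finset.card_compl, Fintype.card_fin]
        have := Finset.card_le_two (a := i) (b := j)
        omega
      · intro a b ha hb
        have fix : ∀ x, x ∈ ({i, j} : Finset (Fin k)) → (π b : Perm (Fin k)) x = x := by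
          intro x hx
          by_contra hne
          have := hb (Perm.mem_support.mpr hne)
          exact (Finset.mem_compl.mp this) hx
        simp only [hc]
        rw [fix i (by simp), fix j (by simp)]
        ring
      · intro m hm
        rw [hcase m hm i j, sub_self]
      · intro x hx
        rw [Perm.mem_support] at hx
        simp only [Finset.mem_compl, Finset.mem_insert, Finset.mem_singleton, not_or]
        exact ⟨fun h => hx (by rw [h, hi]), fun h => hx (by rw [h, hj])⟩
    let z : Fin k := ⟨0, by omega⟩
    let o : Fin k := ⟨1, by omega⟩
    let q : Fin k := ⟨2, by omega⟩
    have hzo : z ≠ o := by simp [z, o]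
    have hzq : z ≠ q := by simp [z, q]
    have hoq : o ≠ q := by simp [o, q]
    have hex : ∀ i j : Fin k, ∃ h : H, i ≠ j → ((π h : Perm (Fin k)) z = i ∧ (π h : Perm (Fin k)) o = j) := by
      intro i j
      by_cases hij : i = j
      · exact ⟨1, fun h => absurd hij h⟩
      · obtain ⟨σ, hσ⟩ := alt_two_trans k hk hzo hij
        obtain ⟨h, rfl⟩ := hπ σ
        exact ⟨h, fun _ => hσ⟩
    choose t ht using hex
    let φ0 : Fin k → Fin k → ZMod p := fun i j => c (t i j) z - c (t i j) o
    -- characterisation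
    have hφ0 : ∀ h i j, i ≠ j → c h i - c h j = φ0 ((π h : Perm (Fin k)) i) ((π h : Perm (Fin k)) j) - φ0 i j := by
      intro h i j hij
      have hij' : (π h : Perm (Fin k)) i ≠ (π h : Perm (Fin k)) j := fun e => hij ((π h : Perm (Fin k)).injective e)
      obtain ⟨e1, e2⟩ := ht i j hij
      obtain ⟨e3, e4⟩ := ht _ _ hij'
      set t1 := t i j with ht1
      set t2 := t ((π h : Perm (Fin k)) i) ((π h : Perm (Fin k)) j) with ht2
      have f1 : (π (t2⁻¹ * (h * t1)) : Perm (Fin k)) z = z := by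
        simp only [map_mul, map_inv, Subgroup.coe_mul, Subgroup.coe_inv, Perm.mul_apply, e1]
        rw [Perm.inv_eq_iff_eq, e3]
      have f2 : (π (t2⁻¹ * (h * t1)) : Perm (Fin k)) o = o := by
        simp only [map_mul, map_inv, Subgroup.coe_mul, Subgroup.coe_inv, Perm.mul_apply, e2]
        rw [Perm.inv_eq_iff_eq, e4]
      have h5 := hD _ z o f1 f2
      have h6 := hc t2 (t2⁻¹ * (h * t1)) z
      have h7 := hc t2 (t2⁻¹ * (h * t1)) o
      rw [f1, mul_inv_cancel_left, hc, e1] at h6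
      rw [f2, mul_inv_cancel_left, hc, e2] at h7
      change _ = (c t2 z - c t2 o) - (c t1 z - c t1 o)
      linear_combination h6 - h7 + h5
    have hT : ∀ i j, i ≠ j → φ0 i j + φ0 j i = φ0 z o + φ0 o z := by
      intro i j hij
      obtain ⟨σ, hσ1, hσ2⟩ := alt_two_trans k hk hzo hij
      obtain ⟨h, rfl⟩ := hπ σ
      have a1 := hφ0 h z o hzo
      have a2 := hφ0 h o z hzo.symm
      rw [hσ1, hσ2] at a1 a2
      linear_combination - a1 - a2
    have hU : ∀ i j l, i ≠ j → i ≠ l → j ≠ l → φ0 i j + φ0 j l + φ0 l i = φ0 z o + φ0 o q + φ0 q z := by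
      intro i j l hij hil hjl
      obtain ⟨σ, hσ1, hσ2, hσ3⟩ := alt_three_trans k hk hzo hzq hoq hij hil hjl
      obtain ⟨h, rfl⟩ := hπ σ
      have a1 := hφ0 h z o hzo
      have a2 := hφ0 h o q hoq
      have a3 := hφ0 h q z hzq.symm
      rw [hσ1, hσ2] at a1
      rw [hσ2, hσ3] at a2
      rw [hσ3, hσ1] at a3
      linear_combination - a1 - a2 - a3
    set T := φ0 z o + φ0 o z with hTdef
    set U := φ0 z o + φ0 o q + φ0 q z with hUdef
    have hTU : 3 * T = 2 * U := by
      have b1 := hU z q o hzq hzo hoq.symm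
      have b2 := hT o q hoq
      have b3 := hT q z hzq.symm
      linear_combination hTdef + hUdef + b1 - b2 - b3
    let b : Fin k → ZMod p := fun i => if i = z then 0 else φ0 i z + (T - U)
    have hb : ∀ i j, i ≠ j → φ0 i j + (T - U) = b i - b j := by
      intro i j hij
      simp only [b]
      by_cases hi : i = z
      · have hj : j ≠ z := fun h => hij (by rw [hi, h])
        rw [if_pos hi, if_neg hj, hi]
        have := hT z j hj.symm
        linear_combination this + hTU
      · by_cases hj : j = z
        · rw [if_neg hi, if_pos hj, hj]; ring
        · rw [if_neg hi, if_neg hj]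
          have c1 := hU i j z hij hi hj
          have c2 := hT i z hi
          linear_combination c1 - c2
    have hconst : ∀ h i j, c h i - b ((π h : Perm (Fin k)) i) + b i = c h j - b ((π h : Perm (Fin k)) j) + b j := by
      intro h i j
      by_cases hij : i = j
      · rw [hij]
      · have hij' : (π h : Perm (Fin k)) i ≠ (π h : Perm (Fin k)) j := fun e => hij ((π h : Perm (Fin k)).injective e)
        have d1 := hφ0 h i j hij
        have d2 := hb i j hij
        have d3 := hb _ _ hij'
        linear_combination d1 + d3 - d2
    have hzero := min_perfect k hk π hπ hmin p (fun h => c h i0 - b ((π h : Perm (Fin k)) i0) + b i0) (by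
      intro g h
      have := hconst g i0 ((π h : Perm (Fin k)) i0)
      simp only [hc, map_mul, Subgroup.coe_mul, Perm.mul_apply]
      rw [this]
      ring) m0
    rw [hm0] at hzero
    apply hne
    simpa using hzero
open scoped commutatorElement
theorem solv_char (Q : Type*) [Group Q] [Finite Q] [Nontrivial Q] (hs : Group.IsSolvable Q) :
    ∃ (p : ℕ) (_ : Fact p.Prime) (χ : Q →* Multiplicative (ZMod p)), ∃ q, χ q ≠ 1 := by
  have h1 := Group.IsSolvable.commutator_lt_top_of_nontrivial (G := Q)
  obtain ⟨K, hK, hcK⟩ := (eq_top_or_exists_le_coatom (commutator Q)).resolve_left h1.ne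
  have hn : K.Normal := by
    refine ⟨fun n hn g => ?_⟩
    have h2 : ⁅g, n⁆ ∈ K := hcK (Subgroup.commutator_mem_commutator (Subgroup.mem_top _) (Subgroup.mem_top _))
    have h3 := K.mul_mem h2 hn
    rwa [commutatorElement_def, inv_mul_cancel_right] at h3
  obtain ⟨q, hq⟩ : ∃ q, q ∉ K := by
    by_contra! h
    exact hK.1 ((Subgroup.eq_top_iff' K).mpr h)
  have hcomm : ∀ a b : Q ⧸ K, a * b = b * a := by
    intro a b
    induction a using QuotientGroup.induction_on with | _ a
    induction b using QuotientGroup.induction_on with | _ b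
    rw [← QuotientGroup.mk_mul, ← QuotientGroup.mk_mul, QuotientGroup.eq]
    have : ⁅b⁻¹, a⁻¹⁆ ∈ K := hcK (Subgroup.commutator_mem_commutator (Subgroup.mem_top _) (Subgroup.mem_top _))
    rw [commutatorElement_def] at this
    simpa [mul_assoc] using this
  let _ : CommGroup (Q ⧸ K) := { (inferInstance : Group (Q ⧸ K)) with mul_comm := hcomm }
  have hnt : Nontrivial (Q ⧸ K) := ⟨(q : Q ⧸ K), 1, fun h => hq ((QuotientGroup.eq_one_iff q).mp h)⟩
  have hsimp : IsSimpleGroup (Q ⧸ K) := by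
    refine ⟨fun L _ => ?_⟩
    have h4 : K ≤ L.comap (QuotientGroup.mk' K) := by
      intro x hx
      rw [Subgroup.mem_comap, QuotientGroup.mk'_apply, (QuotientGroup.eq_one_iff x).mpr hx]
      exact L.one_mem
    rcases hK.le_iff.mp h4 with h5 | h5
    · right
      rw [← Subgroup.map_comap_eq_self_of_surjective (QuotientGroup.mk'_surjective K) L, h5]
      exact Subgroup.map_top_of_surjective _ (QuotientGroup.mk'_surjective K)
    · left
      rw [← Subgroup.map_comap_eq_self_of_surjective (QuotientGroup.mk'_surjective K) L, h5]
      exact QuotientGroup.map_mk'_self K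
  have hp := IsSimpleGroup.prime_card (α := Q ⧸ K)
  have hcy : IsCyclic (Q ⧸ K) := inferInstance
  refine ⟨_, ⟨hp⟩, ((zmodCyclicMulEquiv hcy).symm.toMonoidHom).comp (QuotientGroup.mk' K), q, ?_⟩
  intro h
  apply hq
  rw [← QuotientGroup.eq_one_iff]
  simpa using h

theorem char_contra (k : ℕ) (hk : 20 < k) {H : Type*} [Group H] (π : H →* alternatingGroup (Fin k))
    (hπ : Function.Surjective π) (hmin : ∀ X : Subgroup H, X.map π = ⊤ → X = ⊤)
    (p : ℕ) [Fact p.Prime] (i0 : Fin k) (Y : Subgroup H)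
    (hY : ∀ h, h ∈ Y ↔ (π h : Perm (Fin k)) i0 = i0) (χ : Y →* Multiplicative (ZMod p))
    (m : Y) (hm : π m = 1) (hχ : χ m ≠ 1) : False := by
  have ht : ∀ i : Fin k, ∃ t : H, (π t : Perm (Fin k)) i0 = i := by
    intro i
    obtain ⟨a, ha⟩ := exists_third k hk {i0} (by simp)
    obtain ⟨b, hb⟩ := exists_third k hk {i} (by simp)
    simp only [Finset.mem_singleton] at ha hb
    obtain ⟨σ, h1, -⟩ := alt_two_trans k hk (Ne.symm ha) (Ne.symm hb)
    obtain ⟨t, rfl⟩ := hπ σ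
    exact ⟨t, h1⟩
  choose t ht using ht
  have hmem : ∀ h i, (t ((π h : Perm (Fin k)) i))⁻¹ * h * t i ∈ Y := by
    intro h i
    rw [hY]
    simp only [map_mul, map_inv, Subgroup.coe_mul, Subgroup.coe_inv, Perm.mul_apply, ht]
    rw [Perm.inv_eq_iff_eq, ht]
  have hm' : (m : H) ∈ Y := m.2
  refine cocycle_contra k hk π hπ hmin p
    (fun h i => Multiplicative.toAdd (χ ⟨_, hmem h i⟩)) ?_ m hm i0 ?_
  · intro g h i
    rw [← toAdd_mul, ← map_mul]
    congr 2
    apply Subtype.ext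
    simp only [Subgroup.coe_mul, map_mul, Perm.mul_apply]
    group
  · intro h0
    apply hχ
    have h1 : χ ⟨_, hmem m i0⟩ = 1 := by simpa using h0
    have ht0 : t i0 ∈ Y := (hY _).mpr (ht i0)
    have h2 : (⟨_, hmem m i0⟩ : Y) = ⟨t i0, ht0⟩⁻¹ * m * ⟨t i0, ht0⟩ := by
      apply Subtype.ext
      simp [hm]
    rw [h2, map_mul, map_mul, map_inv, mul_comm, mul_inv_cancel_left] at h1
    exact h1
theorem stab_normal (k : ℕ) (hk : 20 < k) (i0 : Fin k) (P : Subgroup (alternatingGroup (Fin k)))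
    (hconj : ∀ σ ∈ MulAction.stabilizer (alternatingGroup (Fin k)) i0, ∀ n ∈ P, σ * n * σ⁻¹ ∈ P)
    (hP : P ≤ MulAction.stabilizer (alternatingGroup (Fin k)) i0) :
    P = ⊥ ∨ P = MulAction.stabilizer (alternatingGroup (Fin k)) i0 := by
  have hr : ∀ σ : alternatingGroup (Fin k), σ ∈ MulAction.stabilizer (alternatingGroup (Fin k)) i0 ↔
      σ ∈ (alternatingGroup.ofSubtype ({i0}ᶜ : Finset (Fin k))).range := by
    intro σ
    rw [alternatingGroup.mem_range_ofSubtype_iff, Finset.subset_compl_singleton, Perm.notMem_support, MulAction.mem_stabilizer_iff]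
    rfl
  have hsimp : IsSimpleGroup (alternatingGroup ({i0}ᶜ : Finset (Fin k))) := by
    apply alternatingGroup.isSimpleGroup
    rw [Nat.card_eq_fintype_card, Fintype.card_coe, Finset.card_compl, Fintype.card_fin, Finset.card_singleton]
    omega
  set e := alternatingGroup.ofSubtype ({i0}ᶜ : Finset (Fin k)) with he
  have hn : (P.comap e).Normal := by
    refine ⟨fun n hn g => ?_⟩
    rw [Subgroup.mem_comap] at hn ⊢
    rw [map_mul, map_mul, map_inv]
    exact hconj _ ((hr _).mpr ⟨g, rfl⟩) _ hn
  rcases hn.eq_bot_or_eq_top with h | h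
  · left
    rw [eq_bot_iff]
    intro x hx
    obtain ⟨a, rfl⟩ := (hr _).mp (hP hx)
    have : a ∈ P.comap e := hx
    rw [h, Subgroup.mem_bot] at this
    rw [this, map_one]
    exact Subgroup.one_mem _
  · right
    apply le_antisymm hP
    intro x hx
    obtain ⟨a, rfl⟩ := (hr _).mp hx
    have : a ∈ P.comap e := by rw [h]; trivial
    exact this

theorem ker_solvable (k : ℕ) {H : Type*} [Group H] [Finite H] (π : H →* alternatingGroup (Fin k))
    (hπ : Function.Surjective π) (hmin : ∀ X : Subgroup H, X.map π = ⊤ → X = ⊤) :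
    Group.IsSolvable π.ker := by
  have h1 : π.ker ≤ frattini H := by
    unfold frattini Order.radical
    simp only [le_iInf_iff]
    intro K hK
    by_contra h
    have h2 : K ⊔ π.ker = ⊤ := by
      rw [← hK.lt_iff]
      exact lt_of_le_of_ne le_sup_left (fun e => h (by rw [e]; exact le_sup_right))
    apply hK.1
    apply hmin
    rw [← Subgroup.map_eq_map_iff.mpr (show K ⊔ π.ker ⊔ π.ker = K ⊔ π.ker by rw [sup_assoc, sup_idem]), h2]
    exact Subgroup.map_top_of_surjective _ hπ
  have h2 : Group.IsNilpotent (frattini H) := frattini_nilpotent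
  have h3 : Group.IsSolvable (frattini H) := inferInstance
  exact Group.isSolvable_of_isSolvable_injective (f := Subgroup.inclusion h1) (Subgroup.inclusion_injective h1)

theorem min_contra (k ℓ : ℕ) (hk : 20 < k) {H : Type*} [Group H] [Finite H] (π : H →* alternatingGroup (Fin k))
    (hπ : Function.Surjective π) (hmin : ∀ X : Subgroup H, X.map π = ⊤ → X = ⊤)
    (hker : π.ker ≠ ⊥) (f : H →* Perm (Fin ℓ)) (hf : Function.Injective f)
    (hl : ℓ < k * (k - 1)) : False := by
  have hsolv := ker_solvable k π hπ hmin
  obtain ⟨m, hm, hm1⟩ : ∃ m : H, m ∈ π.ker ∧ m ≠ 1 := by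
    obtain ⟨m, h⟩ := Subgroup.ne_bot_iff_exists_ne_one.mp hker
    exact ⟨m, m.2, fun e => h (Subtype.ext e)⟩
  obtain ⟨x, hx⟩ : ∃ x, f m x ≠ x := by
    by_contra! h
    apply hm1
    apply hf
    rw [map_one]
    ext y
    rw [h]; rfl
  let X : Subgroup H := (MulAction.stabilizer (Perm (Fin ℓ)) x).comap f
  have hmX : (m : H) ∉ X := hx
  have hXi : X.index ≤ ℓ := by
    have h1 : X.index = (MulAction.stabilizer (Perm (Fin ℓ)) x).relIndex f.range := Subgroup.index_comap _ _
    have h2 := Subgroup.relIndex_le_of_le_right (H := MulAction.stabilizer (Perm (Fin ℓ)) x)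
      (K := f.range) (L := ⊤) le_top Subgroup.index_ne_zero_of_finite
    rw [Subgroup.relIndex_top_right] at h2
    rw [MulAction.index_stabilizer_of_transitive, Nat.card_fin] at h2
    omega
  have hXtop : X ≠ ⊤ := fun h => hmX (by rw [h]; trivial)
  -- the image of X fixes a point
  obtain ⟨i0, hi0⟩ : ∃ i0 : Fin k, ∀ h ∈ X, (π h : Perm (Fin k)) i0 = i0 := by
    by_contra! hno
    have h1 : (((X.map π).map (alternatingGroup (Fin k)).subtype)).index < k * (k - 1) := by
      rw [Subgroup.index_map_subtype, ← Subgroup.index_comap_of_surjective (X.map π) hπ]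
      have hnt : Nontrivial (Fin k) := Fin.nontrivial_iff_two_le.mpr (by omega)
      rw [alternatingGroup.index_eq_two]
      have h2 := Subgroup.relIndex_mul_index (Subgroup.le_comap_map π X)
      have h3 : X.relIndex ((X.map π).comap π) ≠ 1 := by
        rw [Ne, Subgroup.relIndex_eq_one]
        intro h
        apply hmX
        apply h
        rw [Subgroup.mem_comap, MonoidHom.mem_ker.mp hm]
        exact Subgroup.one_mem _
      have h4 : X.relIndex ((X.map π).comap π) ≠ 0 := Subgroup.index_ne_zero_of_finite
      have h5 : 2 ≤ X.relIndex ((X.map π).comap π) := by omega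
      nlinarith
    have h6 := classify k hk ((X.map π).map (alternatingGroup (Fin k)).subtype)
      (Subgroup.map_subtype_le _) h1 (by
        intro i
        obtain ⟨h, hX, hh⟩ := hno i
        exact ⟨_, ⟨_, ⟨h, hX, rfl⟩, rfl⟩, hh⟩)
    apply hXtop
    apply hmin
    rw [eq_top_iff]
    intro a _
    obtain ⟨b, hb, hab⟩ := h6 a.2
    have : b = a := Subtype.ext hab
    rwa [← this]
  let S := MulAction.stabilizer (alternatingGroup (Fin k)) i0
  let Y : Subgroup H := S.comap π
  have hXY : X ≤ Y := fun h hh => hi0 h hh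
  have hnt : Nontrivial (Fin k) := Fin.nontrivial_iff_two_le.mpr (by omega)
  have hSi : S.index = k := by
    have : MulAction.IsPretransitive (alternatingGroup (Fin k)) (Fin k) := by
      refine ⟨fun i j => ?_⟩
      obtain ⟨a, ha⟩ := exists_third k hk {i} (by simp)
      obtain ⟨b, hb⟩ := exists_third k hk {j} (by simp)
      simp only [Finset.mem_singleton] at ha hb
      obtain ⟨σ, h1, -⟩ := alt_two_trans k hk (Ne.symm ha) (Ne.symm hb)
      exact ⟨σ, h1⟩
    rw [MulAction.index_stabilizer_of_transitive, Nat.card_fin]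
  have hYi : Y.index = k := by
    rw [Subgroup.index_comap_of_surjective S hπ, hSi]
  have hr : X.relIndex Y < k - 1 := by
    have h2 := Subgroup.relIndex_mul_index hXY
    rw [hYi] at h2
    by_contra! h
    have := Nat.mul_le_mul_right k h
    rw [mul_comm (k - 1) k] at this
    omega
  let N : Subgroup Y := (X.subgroupOf Y).normalCore
  have hNX : ∀ n ∈ N, (n : H) ∈ X := fun n hn => Subgroup.normalCore_le (X.subgroupOf Y) hn
  have hNn : N.Normal := inferInstance
  have hNi : N.index ≤ (k - 2).factorial := by
    have h1 : N.index = Nat.card (MulAction.toPermHom Y (Y ⧸ X.subgroupOf Y)).range := by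
      rw [← Subgroup.index_ker, ← Subgroup.normalCore_eq_ker]
    rw [h1]
    refine (Subgroup.card_le_card_group _).trans ?_
    rw [Nat.card_perm]
    apply Nat.factorial_le
    change X.relIndex Y ≤ _
    omega
  let ρ : Y →* alternatingGroup (Fin k) := π.comp Y.subtype
  have hρr : ρ.range = S := by
    ext σ
    constructor
    · rintro ⟨y, rfl⟩
      exact y.2
    · intro h
      obtain ⟨y, rfl⟩ := hπ σ
      exact ⟨⟨y, h⟩, rfl⟩
  have hNS : N.map ρ = S := by
    refine (stab_normal k hk i0 (N.map ρ) ?_ ?_).resolve_left ?_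
    · intro σ hσ n hn
      obtain ⟨n, hn, rfl⟩ := hn
      have hσ' : σ ∈ ρ.range := by rw [hρr]; exact hσ
      obtain ⟨y, rfl⟩ := hσ'
      exact ⟨y * n * y⁻¹, hNn.conj_mem _ hn _, by simp⟩
    · rintro _ ⟨n, hn, rfl⟩
      exact n.2
    · intro hbot
      have h1 : N ≤ ρ.ker := (Subgroup.map_eq_bot_iff N).mp hbot
      have h2 := Nat.le_of_dvd (Nat.pos_of_ne_zero Subgroup.index_ne_zero_of_finite) (Subgroup.index_dvd_of_le h1)
      rw [Subgroup.index_ker, hρr] at h2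
      have h3 := S.card_mul_index
      rw [hSi] at h3
      have h4 := two_mul_nat_card_alternatingGroup (α := Fin k)
      rw [Nat.card_perm, Nat.card_fin] at h4
      obtain ⟨j, rfl⟩ : ∃ j, k = j + 2 := ⟨k - 2, by omega⟩
      rw [Nat.factorial_succ, Nat.factorial_succ, ← h3] at h4
      have h5 : 2 * Nat.card S = (j + 1) * j.factorial := by
        apply Nat.eq_of_mul_eq_mul_right (show 0 < j + 2 by omega)
        linarith
      have h6 : Nat.card S ≤ j.factorial := by
        have := h2.trans hNi
        simpa using this
      have := Nat.factorial_pos j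
      nlinarith
  have hm' : (m : H) ∈ Y := by
    change π m ∈ S
    rw [MonoidHom.mem_ker.mp hm]; exact S.one_mem
  have hkerY : ∀ h ∈ π.ker, h ∈ Y := by
    intro h hh
    change π h ∈ S
    rw [MonoidHom.mem_ker.mp hh]; exact S.one_mem
  have hQnt : Nontrivial (Y ⧸ N) := by
    refine ⟨((⟨m, hm'⟩ : Y) : Y ⧸ N), 1, fun h => ?_⟩
    rw [QuotientGroup.eq_one_iff] at h
    exact hmX (hNX _ h)
  have hdecomp : ∀ y : Y, ∃ n ∈ N, ∃ z : π.ker, y = n * ⟨z, hkerY z z.2⟩ := by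
    intro y
    have h1 : ρ y ∈ N.map ρ := by rw [hNS]; exact y.2
    obtain ⟨n, hn, hny⟩ := h1
    refine ⟨n, hn, ⟨(n : H)⁻¹ * y, ?_⟩, ?_⟩
    · rw [MonoidHom.mem_ker, map_mul, map_inv]
      have : π (n : H) = π (y : H) := hny
      rw [this, inv_mul_cancel]
    · apply Subtype.ext
      simp
  have hQs : Group.IsSolvable (Y ⧸ N) := by
    refine Group.isSolvable_of_surjective
      (f := (QuotientGroup.mk' N).comp (Subgroup.inclusion (show π.ker ≤ Y from hkerY))) ?_
    intro q
    induction q using QuotientGroup.induction_on with | _ y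
    obtain ⟨n, hn, z, rfl⟩ := hdecomp y
    refine ⟨z, ?_⟩
    rw [QuotientGroup.mk_mul, (QuotientGroup.eq_one_iff n).mpr hn, one_mul]
    rfl
  obtain ⟨p, hp, χ, q, hq⟩ := solv_char (Y ⧸ N) hQs
  induction q using QuotientGroup.induction_on with | _ y
  obtain ⟨n, hn, z, rfl⟩ := hdecomp y
  rw [QuotientGroup.mk_mul, (QuotientGroup.eq_one_iff n).mpr hn, one_mul] at hq
  exact char_contra k hk π hπ hmin p i0 Y (fun h => Iff.rfl) (χ.comp (QuotientGroup.mk' N))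
    ⟨z, hkerY z z.2⟩ z.2 hq

theorem nonsplit_main
    (k ℓ : ℕ) (hk : 20 < k)
    (H : Type*) [Group H] [Finite H]
    (M : Subgroup H) [M.Normal]
    (iso : H ⧸ M ≃* alternatingGroup (Fin k))
    (nonsplit : ¬ ∃ K : Subgroup H, M.IsComplement' K)
    (f : H →* Equiv.Perm (Fin ℓ)) (hf : Function.Injective f) :
    k * (k - 1) ≤ ℓ := by
  by_contra! hl
  let π : H →* alternatingGroup (Fin k) := iso.toMonoidHom.comp (QuotientGroup.mk' M)
  have hπ : Function.Surjective π := iso.surjective.comp (QuotientGroup.mk'_surjective M)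
  have hπM : ∀ h, π h = 1 ↔ h ∈ M := by
    intro h
    rw [← QuotientGroup.eq_one_iff]
    exact iso.map_eq_one_iff
  obtain ⟨L, hL, hLmin⟩ := (wellFounded_lt (α := Subgroup H)).has_min {L | L.map π = ⊤}
    ⟨⊤, Subgroup.map_top_of_surjective _ hπ⟩
  have hL' : L.map π = ⊤ := hL
  have hsurj : Function.Surjective (π.comp L.subtype) := by
    intro σ
    have : σ ∈ L.map π := by rw [hL']; trivial
    obtain ⟨h, hh, rfl⟩ := this
    exact ⟨⟨h, hh⟩, rfl⟩
  refine min_contra k ℓ hk (π.comp L.subtype) hsurj ?_ ?_ (f.comp L.subtype)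
    (hf.comp Subtype.val_injective) hl
  · intro X hX
    rw [← Subgroup.map_map] at hX
    have h1 := hLmin _ hX
    have h2 : X.map L.subtype = L := by
      by_contra hne
      exact h1 (lt_of_le_of_ne (Subgroup.map_subtype_le X) hne)
    rw [eq_top_iff]
    intro x _
    have h3 : (x : H) ∈ X.map L.subtype := by rw [h2]; exact x.2
    obtain ⟨y, hy, hyx⟩ := h3
    have : y = x := Subtype.ext hyx
    rwa [← this]
  · intro hbot
    apply nonsplit
    refine ⟨L, Subgroup.isComplement'_of_disjoint_and_mul_eq_univ ?_ ?_⟩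
    · rw [Subgroup.disjoint_def]
      intro x hxM hxL
      have h1 : (⟨x, hxL⟩ : L) ∈ (π.comp L.subtype).ker := (hπM x).mpr hxM
      rw [hbot, Subgroup.mem_bot] at h1
      exact congrArg Subtype.val h1
    · rw [Set.eq_univ_iff_forall]
      intro x
      obtain ⟨l, hl⟩ := hsurj (π x)
      have hl' : π (l : H) = π x := hl
      refine Set.mem_mul.mpr ⟨x * (l : H)⁻¹, ?_, l, l.2, by simp⟩
      rw [SetLike.mem_coe, ← hπM, map_mul, map_inv, hl', mul_inv_cancel]

end NonsplitAux

/-- **Theorem (Guralnick–Liebeck, Theorem 1).**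
If `H` is a finite group with a nontrivial normal subgroup `M` such that `H/M ≅ A_k`
with `k > 20`, the extension `1 → M → H → A_k → 1` is nonsplit (no subgroup of `H` is a
complement to `M`), and `H` embeds into the symmetric group `S_ℓ`, then `ℓ ≥ k(k-1)`. -/
theorem nonsplit_extension_min_degree
    (k ℓ : ℕ) (hk : 20 < k)
    (H : Type*) [Group H] [Finite H]
    (M : Subgroup H) [M.Normal] (hM : M ≠ ⊥)
    (iso : H ⧸ M ≃* alternatingGroup (Fin k))
    (nonsplit : ¬ ∃ K : Subgroup H, M.IsComplement' K)
    (f : H →* Equiv.Perm (Fin ℓ)) (hf : Function.Injective f) :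
    k * (k - 1) ≤ ℓ := by
  exact NonsplitAux.nonsplit_main k ℓ hk H M iso nonsplit f hf
end

section
/- Let p be an odd prime dividing k, k ≥ 10, G = A_k, Y ≅ S_{k-2} a Young subgroup of G stabilizing a 2-subset, and θ the nontrivial 1-dimensional 𝔽_p Y-module. Then the induced module θ↑_Y^G has socle and head both isomorphic to L = D^(k-1,1), and the quotient of its maximal submodule by its socle is isomorphic to 𝔽_p ⊕ D^(k-2,1,1). -/
/-!
Concrete models over `F = 𝔽_p` with `p` odd, `p ∣ k`, for `G = A_k`: the induced module
`θ↑_Y^G` (for `Y ≅ S_{k-2}` the stabilizer in `G` of `{1,2}` and `θ` its sign character)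
is the module of antisymmetric functions on ordered pairs of distinct points, a submodule
of the tabloid permutation module `M^(k-2,1,1)`. The Specht module `S^(k-2,1,1)` is its
submodule of antisymmetric functions with vanishing row sums, `D^λ = S^λ/(S^λ ∩ (S^λ)^⊥)`
(with the form making the tabloid basis orthonormal), and `D^(k-1,1)` is the quotient of
the zero-sum submodule of `F^k` by the constants (using `p ∣ k`).
-/

open Equiv

/-- Permutation representation of `G` on `X → F` from an action of `G` on `X`. -/
def permRep (F G X : Type*) [CommRing F] [Group G] [MulAction G X] :
    Representation F G (X → F) where
  toFun g := LinearMap.funLeft F F (fun x => g⁻¹ • x)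
  map_one' := by ext v x; simp
  map_mul' g h := by ext v x; simp [LinearMap.funLeft, mul_smul]

variable {F G V : Type*} [CommRing F] [Group G] [AddCommGroup V] [Module F V]

/-- A submodule invariant under a representation. -/
def InvSub (ρ : Representation F G V) (U : Submodule F V) : Prop :=
  ∀ g, ∀ v ∈ U, ρ g v ∈ U

/-- An irreducible (simple) invariant submodule. -/
def IsIrreducibleSub (ρ : Representation F G V) (U : Submodule F V) : Prop :=
  InvSub ρ U ∧ U ≠ ⊥ ∧ ∀ W ≤ U, InvSub ρ W → W = ⊥ ∨ W = U

/-- The socle of the invariant submodule `S`: the sum of all irreducible invariant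
submodules contained in `S`. -/
def socIn (ρ : Representation F G V) (S : Submodule F V) : Submodule F V :=
  sSup {U | U ≤ S ∧ IsIrreducibleSub ρ U}

/-- The radical of the invariant submodule `S`: the intersection of all maximal proper
invariant submodules of `S` (so `S/radIn ρ S` is the head of `S`). -/
def radIn (ρ : Representation F G V) (S : Submodule F V) : Submodule F V :=
  sInf {U | U ≤ S ∧ InvSub ρ U ∧ U ≠ S ∧
    ∀ W, U ≤ W → W ≤ S → InvSub ρ W → W = U ∨ W = S}

/-- `S` is an indecomposable invariant submodule. -/
def IsIndecomposableSub (ρ : Representation F G V) (S : Submodule F V) : Prop :=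
  ¬ ∃ U W : Submodule F V, InvSub ρ U ∧ InvSub ρ W ∧ U ≠ ⊥ ∧ W ≠ ⊥ ∧
      U ⊓ W = ⊥ ∧ U ⊔ W = S

/-- The subrepresentation on an invariant submodule. -/
def subRep (ρ : Representation F G V) (U : Submodule F V)
    (hU : InvSub ρ U) : Representation F G U where
  toFun g := (ρ g).restrict (hU g)
  map_one' := by ext v; simp [LinearMap.restrict_apply]
  map_mul' g h := by ext v; simp [LinearMap.restrict_apply]

/-- The quotient representation on `V ⧸ U` for an invariant submodule `U`. -/
def quotRep (ρ : Representation F G V) (U : Submodule F V)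
    (hU : InvSub ρ U) : Representation F G (V ⧸ U) where
  toFun g := U.mapQ U (ρ g) (fun v hv => hU g v hv)
  map_one' := by
    refine Submodule.linearMap_qext _ ?_
    ext v; simp
  map_mul' g h := by
    refine Submodule.linearMap_qext _ ?_
    ext v; simp [Submodule.mapQ_apply]

/-- Ordered pairs of distinct elements of `Fin k`, i.e. `(k-2,1,1)`-tabloids. -/
def OP (k : ℕ) := {q : Fin k × Fin k // q.1 ≠ q.2}

instance (k : ℕ) : Fintype (OP k) := Subtype.fintype _
instance (k : ℕ) : DecidableEq (OP k) := Subtype.instDecidableEq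

instance (k : ℕ) : MulAction (Equiv.Perm (Fin k)) (OP k) where
  smul g q := ⟨(g q.1.1, g q.1.2), fun hgq => q.2 (g.injective hgq)⟩
  one_smul q := by cases q; rfl
  mul_smul g h q := by cases q; rfl

/-- Transposing an ordered pair. -/
def swapOP {k : ℕ} (q : OP k) : OP k := ⟨(q.1.2, q.1.1), fun h => q.2 h.symm⟩

/-- Antisymmetric functions on ordered pairs. -/
noncomputable def antisymSub (k : ℕ) (F : Type*) [CommRing F] : Submodule F (OP k → F) :=
  ⨅ q : OP k, LinearMap.ker
    ((LinearMap.proj q : (OP k → F) →ₗ[F] F) + LinearMap.proj (swapOP q))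

/-- Functions on ordered pairs whose row sums vanish. -/
noncomputable def rowZeroSub (k : ℕ) (F : Type*) [CommRing F] : Submodule F (OP k → F) :=
  ⨅ i : Fin k, LinearMap.ker
    (∑ q ∈ Finset.univ.filter (fun q : OP k => q.1.1 = i),
      (LinearMap.proj q : (OP k → F) →ₗ[F] F))

/-- The Specht module `S^(k-2,1,1)` inside the tabloid permutation module. -/
noncomputable def spechtHook (k : ℕ) (F : Type*) [CommRing F] : Submodule F (OP k → F) :=
  antisymSub k F ⊓ rowZeroSub k F

lemma antisym_inv (k : ℕ) (F : Type*) [CommRing F] :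
    InvSub (permRep F (Equiv.Perm (Fin k)) (OP k)) (antisymSub k F) := by
  intro g v hv
  simp only [antisymSub, Submodule.mem_iInf, LinearMap.mem_ker, LinearMap.add_apply,
    LinearMap.proj_apply] at hv ⊢
  intro q
  exact hv (g⁻¹ • q)

lemma rowZero_inv (k : ℕ) (F : Type*) [CommRing F] :
    InvSub (permRep F (Equiv.Perm (Fin k)) (OP k)) (rowZeroSub k F) := by
  intro g v hv
  simp only [rowZeroSub, Submodule.mem_iInf, LinearMap.mem_ker, LinearMap.sum_apply,
    LinearMap.proj_apply] at hv ⊢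
  intro i
  rw [← hv (g⁻¹ i)]
  refine Finset.sum_nbij' (fun q => g⁻¹ • q) (fun q => g • q) ?_ ?_ ?_ ?_ ?_
  · intro q hq
    simp only [Finset.mem_filter, Finset.mem_univ, true_and] at hq ⊢
    show g⁻¹ q.1.1 = g⁻¹ i
    rw [hq]
  · intro q hq
    simp only [Finset.mem_filter, Finset.mem_univ, true_and] at hq ⊢
    show g q.1.1 = i
    rw [hq]; simp
  · intro q _; exact smul_inv_smul g q
  · intro q _; exact inv_smul_smul g q
  · intro q _; rfl

lemma spechtHook_inv (k : ℕ) (F : Type*) [CommRing F] :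
    InvSub (permRep F (Equiv.Perm (Fin k)) (OP k)) (spechtHook k F) :=
  fun g v hv => ⟨antisym_inv k F g v hv.1, rowZero_inv k F g v hv.2⟩

/-- The linear functional `v ↦ ∑_q w q * v q` (the standard bilinear form against `w`). -/
noncomputable def formMap {X : Type*} [Fintype X] [DecidableEq X] (F : Type*) [CommRing F]
    (w : X → F) : (X → F) →ₗ[F] F :=
  ∑ q : X, w q • (LinearMap.proj q : (X → F) →ₗ[F] F)

/-- The orthogonal complement of `U` with respect to the standard form. -/
noncomputable def perpSub {X : Type*} [Fintype X] [DecidableEq X] (F : Type*) [CommRing F]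
    (U : Submodule F (X → F)) : Submodule F (X → F) :=
  ⨅ w : U, LinearMap.ker (formMap F (w : X → F))

lemma spechtHook_perp_inv (k : ℕ) (F : Type*) [CommRing F] :
    InvSub (permRep F (Equiv.Perm (Fin k)) (OP k))
      (spechtHook k F ⊓ perpSub F (spechtHook k F)) := by
  intro g v hv
  refine ⟨spechtHook_inv k F g v hv.1, ?_⟩
  have hv2 : ∀ w : (spechtHook k F), ∑ q : OP k, (w : OP k → F) q * v q = 0 := by
    intro w
    have h2 := hv.2
    rw [perpSub] at h2
    have := (Submodule.mem_iInf _).mp h2 w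
    simpa only [LinearMap.mem_ker, formMap, LinearMap.sum_apply,
      LinearMap.smul_apply, LinearMap.proj_apply, smul_eq_mul] using this
  rw [perpSub]
  refine (Submodule.mem_iInf _).mpr fun w => ?_
  simp only [LinearMap.mem_ker, formMap, LinearMap.sum_apply,
    LinearMap.smul_apply, LinearMap.proj_apply, smul_eq_mul]
  have h1 : ∀ q : OP k,
      (w : OP k → F) q * permRep F (Equiv.Perm (Fin k)) (OP k) g v q
        = (w : OP k → F) q * v (g⁻¹ • q) := fun q => rfl
  calc ∑ q : OP k, (w : OP k → F) q * permRep F (Equiv.Perm (Fin k)) (OP k) g v q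
      = ∑ q : OP k, (w : OP k → F) (g • q) * v q := by
        simp only [h1]
        exact Fintype.sum_equiv (MulAction.toPerm g).symm _ _ (fun q => by
          simp [MulAction.toPerm])
    _ = 0 := by
        have hw : permRep F (Equiv.Perm (Fin k)) (OP k) g⁻¹ (w : OP k → F) ∈
            spechtHook k F := spechtHook_inv k F g⁻¹ w w.2
        have := hv2 ⟨_, hw⟩
        rw [← this]
        exact Finset.sum_congr rfl fun q _ => by
          simp [permRep, LinearMap.funLeft, mul_comm]

/-- The sum-of-coordinates functional on `F^k`. -/
noncomputable def sumFunctional (k : ℕ) (F : Type*) [CommRing F] :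
    (Fin k → F) →ₗ[F] F := ∑ i : Fin k, LinearMap.proj i

/-- The zero-sum submodule of `F^k`, i.e. the Specht module `S^(k-1,1)`. -/
noncomputable def zeroSum (k : ℕ) (F : Type*) [CommRing F] : Submodule F (Fin k → F) :=
  LinearMap.ker (sumFunctional k F)

/-- The line of constant functions in `F^k`. -/
def constLine (k : ℕ) (F : Type*) [CommRing F] : Submodule F (Fin k → F) :=
  Submodule.span F {fun _ => (1 : F)}

lemma zeroSum_inv (k : ℕ) (F : Type*) [CommRing F] :
    InvSub (permRep F (Equiv.Perm (Fin k)) (Fin k)) (zeroSum k F) := by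
  intro g v hv
  simp only [zeroSum, LinearMap.mem_ker, sumFunctional, LinearMap.sum_apply,
    LinearMap.proj_apply] at hv ⊢
  rw [← hv]
  exact Fintype.sum_equiv g⁻¹ _ _ (fun i => rfl)

lemma constLine_comap_inv (k : ℕ) (F : Type*) [CommRing F] :
    InvSub (subRep (permRep F (Equiv.Perm (Fin k)) (Fin k)) (zeroSum k F) (zeroSum_inv k F))
      ((constLine k F).comap (zeroSum k F).subtype) := by
  intro g v hv
  simp only [Submodule.mem_comap, Submodule.subtype_apply] at hv ⊢
  rw [constLine, Submodule.mem_span_singleton] at hv ⊢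
  obtain ⟨c, hc⟩ := hv
  refine ⟨c, ?_⟩
  show _ = permRep F (Equiv.Perm (Fin k)) (Fin k) g (v : Fin k → F)
  rw [← hc]
  rfl


section AltModel

variable (k p : ℕ) [Fact p.Prime]

lemma antisym_inv_alt (F : Type*) [CommRing F] :
    InvSub (permRep F (alternatingGroup (Fin k)) (OP k)) (antisymSub k F) :=
  fun g v hv => antisym_inv k F g v hv

lemma spechtHook_inv_alt (F : Type*) [CommRing F] :
    InvSub (permRep F (alternatingGroup (Fin k)) (OP k)) (spechtHook k F) :=
  fun g v hv => spechtHook_inv k F g v hv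

lemma zeroSum_inv_alt (F : Type*) [CommRing F] :
    InvSub (permRep F (alternatingGroup (Fin k)) (Fin k)) (zeroSum k F) :=
  fun g v hv => zeroSum_inv k F g v hv

lemma constLine_comap_inv_alt (F : Type*) [CommRing F] :
    InvSub (subRep (permRep F (alternatingGroup (Fin k)) (Fin k)) (zeroSum k F)
        (zeroSum_inv_alt k F))
      ((constLine k F).comap (zeroSum k F).subtype) :=
  fun g v hv => constLine_comap_inv k F g v hv

lemma spechtHook_perp_comap_inv_alt :
    InvSub (subRep (permRep (ZMod p) (alternatingGroup (Fin k)) (OP k))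
        (spechtHook k (ZMod p)) (spechtHook_inv_alt k (ZMod p)))
      ((spechtHook k (ZMod p) ⊓ perpSub (ZMod p) (spechtHook k (ZMod p))).comap
        (spechtHook k (ZMod p)).subtype) :=
  by
  intro g v hv
  simp only [Submodule.mem_comap, Submodule.subtype_apply] at hv ⊢
  exact spechtHook_perp_inv k (ZMod p) (g : Equiv.Perm (Fin k)) (v : OP k → ZMod p) hv

/-- The irreducible module `L = D^(k-1,1)` (for `p ∣ k`): zero-sum vectors modulo
constants. -/
noncomputable def Dk11 := (zeroSum k (ZMod p)) ⧸
  ((constLine k (ZMod p)).comap (zeroSum k (ZMod p)).subtype)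

noncomputable instance : AddCommGroup (Dk11 k p) :=
  inferInstanceAs (AddCommGroup ((zeroSum k (ZMod p)) ⧸
    ((constLine k (ZMod p)).comap (zeroSum k (ZMod p)).subtype)))

noncomputable instance : Module (ZMod p) (Dk11 k p) :=
  inferInstanceAs (Module (ZMod p) ((zeroSum k (ZMod p)) ⧸
    ((constLine k (ZMod p)).comap (zeroSum k (ZMod p)).subtype)))

/-- The representation of `A_k` on `L = D^(k-1,1)`. -/
noncomputable def Dk11Rep : Representation (ZMod p) (alternatingGroup (Fin k)) (Dk11 k p) :=
  quotRep (subRep (permRep (ZMod p) (alternatingGroup (Fin k)) (Fin k)) (zeroSum k (ZMod p))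
      (zeroSum_inv_alt k (ZMod p)))
    ((constLine k (ZMod p)).comap (zeroSum k (ZMod p)).subtype)
    (constLine_comap_inv_alt k (ZMod p))

/-- The irreducible module `D^(k-2,1,1) = S^(k-2,1,1)/(S ∩ S^⊥)`. -/
noncomputable def Dk211 := (spechtHook k (ZMod p)) ⧸
  ((spechtHook k (ZMod p) ⊓ perpSub (ZMod p) (spechtHook k (ZMod p))).comap
    (spechtHook k (ZMod p)).subtype)

noncomputable instance : AddCommGroup (Dk211 k p) :=
  inferInstanceAs (AddCommGroup ((spechtHook k (ZMod p)) ⧸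
    ((spechtHook k (ZMod p) ⊓ perpSub (ZMod p) (spechtHook k (ZMod p))).comap
      (spechtHook k (ZMod p)).subtype)))

noncomputable instance : Module (ZMod p) (Dk211 k p) :=
  inferInstanceAs (Module (ZMod p) ((spechtHook k (ZMod p)) ⧸
    ((spechtHook k (ZMod p) ⊓ perpSub (ZMod p) (spechtHook k (ZMod p))).comap
      (spechtHook k (ZMod p)).subtype)))

/-- The representation of `A_k` on `D^(k-2,1,1)`. -/
noncomputable def Dk211Rep :
    Representation (ZMod p) (alternatingGroup (Fin k)) (Dk211 k p) :=
  quotRep _ _ (spechtHook_perp_comap_inv_alt k p)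

end AltModel

section Core

variable {k : ℕ} {K : Type*} [Field K]

/-- The wedge of two vectors, as an antisymmetric matrix. -/
def wdg (f h : Fin k → K) : Fin k → Fin k → K := fun i j => f i * h j - f j * h i

/-- The standard basis vector. -/
def bv (K : Type*) [Field K] (a : Fin k) : Fin k → K := fun i => if i = a then 1 else 0

/-- The three-cycle `x → y → z → x`. -/
def c3 (x y z : Fin k) : alternatingGroup (Fin k) :=
  if h : x ≠ y ∧ y ≠ z then ⟨swap x y * swap y z, by
    rw [Equiv.Perm.mem_alternatingGroup, map_mul, Equiv.Perm.sign_swap h.1,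
      Equiv.Perm.sign_swap h.2]; rfl⟩ else 1

lemma c3_fst {x y z : Fin k} (h1 : x ≠ y) (h2 : y ≠ z) (h3 : x ≠ z) :
    (c3 x y z : Perm (Fin k)) x = y := by
  simp [c3, h1, h2, swap_apply_of_ne_of_ne h1 h3]

lemma c3_snd {x y z : Fin k} (h1 : x ≠ y) (h2 : y ≠ z) (h3 : x ≠ z) :
    (c3 x y z : Perm (Fin k)) y = z := by
  simp [c3, h1, h2, swap_apply_of_ne_of_ne h3.symm h2.symm]

lemma c3_trd {x y z : Fin k} (h1 : x ≠ y) (h2 : y ≠ z) :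
    (c3 x y z : Perm (Fin k)) z = x := by
  simp [c3, h1, h2]

lemma c3_oth {x y z i : Fin k} (h1 : x ≠ y) (h2 : y ≠ z) (hx : i ≠ x) (hy : i ≠ y)
    (hz : i ≠ z) : (c3 x y z : Perm (Fin k)) i = i := by
  simp [c3, h1, h2, swap_apply_of_ne_of_ne hy hz, swap_apply_of_ne_of_ne hx hy]

lemma exists_fresh (hk : 10 ≤ k) (s : Finset (Fin k)) (hs : s.card ≤ 9) : ∃ i, i ∉ s := by
  by_contra! h
  have : s = Finset.univ := by ext i; simp [h i]
  rw [this] at hs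
  simp at hs
  omega

lemma trans4 (hk : 10 ≤ k) (a b c d a' b' c' d' : Fin k) (h : [a, b, c, d].Nodup)
    (h' : [a', b', c', d'].Nodup) : ∃ g : alternatingGroup (Fin k),
      (g : Perm (Fin k)) a = a' ∧ (g : Perm (Fin k)) b = b' ∧ (g : Perm (Fin k)) c = c' ∧
      (g : Perm (Fin k)) d = d' := by
  have H : MulAction.IsMultiplyPretransitive (alternatingGroup (Fin k)) (Fin k) 4 := by
    have := alternatingGroup.isMultiplyPretransitive (Fin k)
    apply MulAction.isMultiplyPretransitive_of_le (n := Nat.card (Fin k) - 2)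
    · simp; omega
    · simp
  have key : ∀ a b c d : Fin k, [a, b, c, d].Nodup →
      Function.Injective (![a, b, c, d] : Fin 4 → Fin k) := by
    intro a b c d h
    simp only [List.nodup_cons, List.mem_cons, List.not_mem_nil, not_or] at h
    intro i j hij
    fin_cases i <;> fin_cases j <;> simp_all
  obtain ⟨g, hg⟩ := H.exists_smul_eq ⟨_, key a b c d h⟩ ⟨_, key a' b' c' d' h'⟩
  have hg' : ∀ i, g • (![a, b, c, d] : Fin 4 → Fin k) i = (![a', b', c', d'] : Fin 4 → Fin k) i :=
    fun i => DFunLike.congr_fun hg i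
  exact ⟨g, hg' 0, hg' 1, hg' 2, hg' 3⟩

/-- Invariance under even relabelling, vectors. -/
def EvenInv1 (N : Submodule K (Fin k → K)) : Prop :=
  ∀ (g : alternatingGroup (Fin k)), ∀ x ∈ N, (fun i => x ((g : Perm (Fin k)) i)) ∈ N

/-- Invariance under even relabelling, matrices. -/
def EvenInv2 (N : Submodule K (Fin k → Fin k → K)) : Prop :=
  ∀ (g : alternatingGroup (Fin k)), ∀ v ∈ N,
    (fun i j => v ((g : Perm (Fin k)) i) ((g : Perm (Fin k)) j)) ∈ N

lemma bv_comp (g : Perm (Fin k)) (a b : Fin k) (h : g a = b) (i : Fin k) :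
    bv K b (g i) = bv K a i := by
  simp [bv, ← h]

lemma zero_sum_mem (N : Submodule K (Fin k → K)) (o : Fin k)
    (H : ∀ i, i ≠ o → bv K i - bv K o ∈ N) (x : Fin k → K) (hx : ∑ i, x i = 0) : x ∈ N := by
  have : x = ∑ i, x i • (bv K i - bv K o) := by
    funext j
    simp only [Finset.sum_apply, Pi.smul_apply, Pi.sub_apply, smul_eq_mul, mul_sub,
      Finset.sum_sub_distrib, ← Finset.sum_mul, hx]
    simp [bv]
  rw [this]
  refine N.sum_mem fun i _ => N.smul_mem _ ?_
  by_cases h : i = o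
  · simp [h]
  · exact H i h

lemma nonconst_mem (hk : 10 ≤ k) (N : Submodule K (Fin k → K)) (hN : EvenInv1 N)
    (x : Fin k → K) (hx : x ∈ N) (a b : Fin k) (hab : x a ≠ x b) (y : Fin k → K)
    (hy : ∑ i, y i = 0) : y ∈ N := by
  have hab' : a ≠ b := fun h => hab (by rw [h])
  obtain ⟨c, hc⟩ := exists_fresh hk {a, b} (Finset.card_le_two.trans (by norm_num))
  obtain ⟨d, hd⟩ := exists_fresh hk {a, b, c} (Finset.card_le_three.trans (by norm_num))
  obtain ⟨e, he⟩ := exists_fresh hk {a, b, c, d} (Finset.card_le_four.trans (by norm_num))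
  obtain ⟨f, hf⟩ := exists_fresh hk {a, b, c, d, e} (Finset.card_le_five.trans (by norm_num))
  simp only [Finset.mem_insert, Finset.mem_singleton, not_or] at hc hd he hf
  let s : alternatingGroup (Fin k) := ⟨swap a b * swap c d, by
    rw [Equiv.Perm.mem_alternatingGroup, map_mul, Equiv.Perm.sign_swap hab',
      Equiv.Perm.sign_swap (Ne.symm hd.2.2)]; rfl⟩
  have hsa : (s : Perm (Fin k)) a = b := by
    show (swap a b * swap c d) a = b
    rw [Perm.mul_apply, swap_apply_of_ne_of_ne (Ne.symm hc.1) (Ne.symm hd.1), swap_apply_left]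
  have hso : ∀ i, i ≠ a → i ≠ b → i ≠ c → i ≠ d → (s : Perm (Fin k)) i = i := by
    intro i h1 h2 h3 h4
    show (swap a b * swap c d) i = i
    rw [Perm.mul_apply, swap_apply_of_ne_of_ne h3 h4, swap_apply_of_ne_of_ne h1 h2]
  let y1 : Fin k → K := fun i => x i - x ((s : Perm (Fin k)) i)
  have hy1 : y1 ∈ N := N.sub_mem hx (hN s x hx)
  have hy1a : y1 a = x a - x b := by simp only [y1, hsa]
  have hy1o : ∀ i, i ≠ a → i ≠ b → i ≠ c → i ≠ d → y1 i = 0 := by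
    intro i h1 h2 h3 h4; simp only [y1, hso i h1 h2 h3 h4, sub_self]
  let g := c3 a e f
  have hae : a ≠ e := Ne.symm he.1
  have haf : a ≠ f := Ne.symm hf.1
  have hef : e ≠ f := Ne.symm hf.2.2.2.2
  let y2 : Fin k → K := fun i => y1 i - y1 ((g : Perm (Fin k)) i)
  have hy2 : y2 ∈ N := N.sub_mem hy1 (hN g y1 hy1)
  have hy1e : y1 e = 0 := hy1o e he.1 he.2.1 he.2.2.1 he.2.2.2
  have hy1f : y1 f = 0 := hy1o f hf.1 hf.2.1 hf.2.2.1 hf.2.2.2.1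
  have hy2e : y2 = (x a - x b) • (bv K a - bv K f) := by
    funext i
    show y1 i - y1 ((c3 a e f : Perm (Fin k)) i) = _
    by_cases h1 : i = a
    · subst h1; rw [c3_fst hae hef haf, hy1a, hy1e]; simp [bv, haf]
    by_cases h2 : i = e
    · subst h2; rw [c3_snd hae hef haf, hy1e, hy1f]; simp [bv, hae.symm, hef]
    by_cases h3 : i = f
    · subst h3; rw [c3_trd hae hef, hy1a, hy1f]; simp [bv, haf.symm]
    rw [c3_oth hae hef h1 h2 h3]; simp [bv, h1, h3]
  have hm : bv K a - bv K f ∈ N := by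
    rw [hy2e] at hy2
    exact (N.smul_mem_iff (sub_ne_zero.mpr hab)).1 hy2
  refine zero_sum_mem N a (fun i hi => ?_) y hy
  -- move `i` to `a` and `a` to `f`
  obtain ⟨u, hu⟩ := exists_fresh hk {i, a} (Finset.card_le_two.trans (by norm_num))
  obtain ⟨w, hw⟩ := exists_fresh hk {i, a, u} (Finset.card_le_three.trans (by norm_num))
  simp only [Finset.mem_insert, Finset.mem_singleton, not_or] at hu hw
  obtain ⟨g, h1, h2, -, -⟩ := trans4 hk i a u w a f b e (by simp; grind) (by simp; grind)
  have := hN g _ hm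
  convert this using 1
  funext j
  simp [bv_comp _ _ _ h1, bv_comp _ _ _ h2]

lemma wdg_comp (g : Perm (Fin k)) (f h f' h' : Fin k → K) (h1 : ∀ i, f (g i) = f' i)
    (h2 : ∀ i, h (g i) = h' i) :
    (fun i j => wdg f h (g i) (g j)) = wdg f' h' := by
  funext i j; simp [wdg, h1, h2]

/-- The main dichotomy, generating part. -/
lemma disjoint_mem (hk : 10 ≤ k) (N : Submodule K (Fin k → Fin k → K)) (hN : EvenInv2 N)
    (v : Fin k → Fin k → K) (hv : v ∈ N) (hanti : ∀ i j, v i j = - v j i)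
    (a b c d : Fin k) (hnd : [a, b, c, d].Nodup)
    (hne : v a c - v b c - v a d + v b d ≠ 0)
    (a' b' c' d' : Fin k) (hnd' : [a', b', c', d'].Nodup) :
    wdg (bv K a' - bv K b') (bv K c' - bv K d') ∈ N := by
  simp only [List.nodup_cons, List.mem_cons, List.not_mem_nil, not_or, or_false] at hnd
  obtain ⟨⟨hab, hac, had⟩, ⟨hbc, hbd⟩, hcd, -⟩ := hnd
  obtain ⟨e, he⟩ := exists_fresh hk {a, b, c, d} (Finset.card_le_four.trans (by norm_num))
  obtain ⟨f, hf⟩ := exists_fresh hk {a, b, c, d, e} (Finset.card_le_five.trans (by norm_num))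
  obtain ⟨i, hi⟩ := exists_fresh hk {a, b, c, d, e, f} (Finset.card_le_six.trans (by norm_num))
  obtain ⟨j, hj⟩ := exists_fresh hk (insert i {a, b, c, d, e, f})
    ((Finset.card_insert_le _ _).trans
      ((Nat.add_le_add_right Finset.card_le_six 1).trans (by norm_num)))
  simp only [Finset.mem_insert, Finset.mem_singleton, not_or] at he hf hi hj
  obtain ⟨hea, heb, hec, hed⟩ := he
  obtain ⟨hfa, hfb, hfc, hfd, hfe⟩ := hf
  obtain ⟨hia, hib, hic, hid, hie, hif⟩ := hi
  obtain ⟨hji, hja, hjb, hjc, hjd, hje, hjf⟩ := hj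
  -- first two three-cycles
  obtain ⟨g, hg⟩ : ∃ g, g = (c3 a b e : Perm (Fin k)) := ⟨_, rfl⟩
  obtain ⟨h, hh⟩ : ∃ h, h = (c3 c d f : Perm (Fin k)) := ⟨_, rfl⟩
  have hga : g a = b := hg ▸ c3_fst hab (Ne.symm heb) (Ne.symm hea)
  have hgb : g b = e := hg ▸ c3_snd hab (Ne.symm heb) (Ne.symm hea)
  have hge : g e = a := hg ▸ c3_trd hab (Ne.symm heb)
  have hgo : ∀ x, x ≠ a → x ≠ b → x ≠ e → g x = x := fun x h1 h2 h3 =>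
    hg ▸ c3_oth hab (Ne.symm heb) h1 h2 h3
  have hhc : h c = d := hh ▸ c3_fst hcd (Ne.symm hfd) (Ne.symm hfc)
  have hhd : h d = f := hh ▸ c3_snd hcd (Ne.symm hfd) (Ne.symm hfc)
  have hhf : h f = c := hh ▸ c3_trd hcd (Ne.symm hfd)
  have hho : ∀ x, x ≠ c → x ≠ d → x ≠ f → h x = x := fun x h1 h2 h3 =>
    hh ▸ c3_oth hcd (Ne.symm hfd) h1 h2 h3
  have hdis : ∀ x, g x = x ∨ h x = x := by
    intro x
    by_cases h1 : x = a
    · right; subst h1; exact hho _ hac had (Ne.symm hfa)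
    by_cases h2 : x = b
    · right; subst h2; exact hho _ hbc hbd (Ne.symm hfb)
    by_cases h3 : x = e
    · right; subst h3; exact hho _ hec hed (Ne.symm hfe)
    · left; exact hgo x h1 h2 h3
  have hcomm : ∀ x, g (h x) = h (g x) := by
    have : Perm.Disjoint g h := hdis
    intro x
    exact DFunLike.congr_fun this.commute.eq x
  let z1 : Fin k → Fin k → K := fun x y => v x y - v (g x) (g y)
  have hz1 : z1 ∈ N := N.sub_mem hv (by rw [hg]; exact hN _ v hv)
  let z : Fin k → Fin k → K := fun x y => z1 x y - z1 (h x) (h y)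
  have hz : z ∈ N := N.sub_mem hz1 (by rw [hh]; exact hN _ z1 hz1)
  have hzeq : ∀ x y, z x y =
      v x y - v (g x) (g y) - (v (h x) (h y) - v (g (h x)) (g (h y))) := fun x y => rfl
  have hzanti : ∀ x y, z x y = - z y x := by
    intro x y
    rw [hzeq, hzeq, hanti x y, hanti (g x), hanti (h x), hanti (g (h x))]; ring
  have hzg : ∀ x y, g x = x → g y = y → z x y = 0 := by
    intro x y h1 h2
    rw [hzeq, hcomm, hcomm, h1, h2]; ring
  have hzh : ∀ x y, h x = x → h y = y → z x y = 0 := by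
    intro x y h1 h2
    rw [hzeq, h1, h2]; ring
  have hzfix : ∀ x, g x = x → h x = x → ∀ y, z x y = 0 := by
    intro x h1 h2 y
    rcases hdis y with h3 | h3
    · exact hzg x y h1 h3
    · exact hzh x y h2 h3
  have hha : h a = a := hho _ hac had (Ne.symm hfa)
  have hgc : g c = c := hgo _ (Ne.symm hac) (Ne.symm hbc) (Ne.symm hec)
  have hgd : g d = d := hgo _ (Ne.symm had) (Ne.symm hbd) (Ne.symm hed)
  have hzac : z a c = v a c - v b c - v a d + v b d := by
    rw [hzeq, hha, hhc, hga, hgc, hgd]; ring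
  have hzi : ∀ y, z i y = 0 :=
    hzfix i (hgo i hia hib hie) (hho i hic hid hif)
  have hzj : ∀ y, z j y = 0 :=
    hzfix j (hgo j hja hjb hje) (hho j hjc hjd hjf)
  have hzi' : ∀ y, z y i = 0 := fun y => by rw [hzanti, hzi, neg_zero]
  have hzj' : ∀ y, z y j = 0 := fun y => by rw [hzanti, hzj, neg_zero]
  have hzaa : z a a = 0 := hzh a a hha hha
  have hzab : z a b = 0 := hzh a b hha (hho b hbc hbd (Ne.symm hfb))
  have hzae : z a e = 0 := hzh a e hha (hho e hec hed (Ne.symm hfe))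
  -- third three-cycle
  obtain ⟨s, hs⟩ : ∃ s, s = (c3 a j i : Perm (Fin k)) := ⟨_, rfl⟩
  have hsa : s a = j := hs ▸ c3_fst (Ne.symm hja) hji (Ne.symm hia)
  have hsj : s j = i := hs ▸ c3_snd (Ne.symm hja) hji (Ne.symm hia)
  have hsi : s i = a := hs ▸ c3_trd (Ne.symm hja) hji
  have hso : ∀ x, x ≠ a → x ≠ j → x ≠ i → s x = x := fun x h1 h2 h3 =>
    hs ▸ c3_oth (Ne.symm hja) hji h1 h2 h3
  have hz2 : wdg (bv K a - bv K i) (z a) ∈ N := by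
    have hm : (fun x y => z x y - z (s x) (s y)) ∈ N :=
      N.sub_mem hz (by rw [hs]; exact hN _ z hz)
    convert hm using 1
    have hrow : ∀ x y, x = a ∨ x = j ∨ x = i →
        wdg (bv K a - bv K i) (z a) x y = z x y - z (s x) (s y) := by
      intro x y hx
      rcases hx with rfl | rfl | rfl
      · rw [hsa, hzj]
        simp only [wdg, Pi.sub_apply, bv, hzaa]; simp [Ne.symm hia]
      · rw [hsj, hzi, hzj]
        simp only [wdg, Pi.sub_apply, bv, hzj']; simp [hja, hji]
      · rw [hsi, hzi]
        simp only [wdg, Pi.sub_apply, bv, hzi']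
        by_cases h1 : y = a
        · subst h1; simp [hsa, hzj', hia, hzaa]
        by_cases h2 : y = j
        · subst h2; simp [hsj, hzi', hzj', hia]
        by_cases h3 : y = x
        · subst h3; simp [hsi, hzaa, hzi', hia]
        rw [hso y h1 h2 h3]; simp [hia]
    funext x y
    by_cases hx : x = a ∨ x = j ∨ x = i
    · exact hrow x y hx
    by_cases hy : y = a ∨ y = j ∨ y = i
    · have := hrow y x hy
      rw [hzanti x y, hzanti (s x) (s y)]
      have h2 : wdg (bv K a - bv K i) (z a) x y = - wdg (bv K a - bv K i) (z a) y x := by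
        simp [wdg]
      rw [h2, this]; ring
    · push Not at hx hy
      rw [hso x hx.1 hx.2.1 hx.2.2, hso y hy.1 hy.2.1 hy.2.2]
      simp [wdg, bv, hx, hy]
  -- fourth three-cycle
  obtain ⟨t, ht⟩ : ∃ t, t = (c3 c e b : Perm (Fin k)) := ⟨_, rfl⟩
  have htc : t c = e := ht ▸ c3_fst (Ne.symm hec) heb (Ne.symm hbc)
  have hte : t e = b := ht ▸ c3_snd (Ne.symm hec) heb (Ne.symm hbc)
  have htb : t b = c := ht ▸ c3_trd (Ne.symm hec) heb
  have hto : ∀ x, x ≠ c → x ≠ e → x ≠ b → t x = x := fun x h1 h2 h3 =>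
    ht ▸ c3_oth (Ne.symm hec) heb h1 h2 h3
  have hz3 : wdg (bv K a - bv K i) (bv K c - bv K b) ∈ N := by
    have hm : (fun x y => wdg (bv K a - bv K i) (z a) x y -
        wdg (bv K a - bv K i) (z a) (t x) (t y)) ∈ N :=
      N.sub_mem hz2 (by rw [ht]; exact hN _ _ hz2)
    have hta : t a = a := hto a hac (Ne.symm hea) hab
    have hti : t i = i := hto i hic hie hib
    have e1 : ∀ x, (bv K a - bv K i) (t x) = (bv K a - bv K i) x := by
      intro x; simp [bv_comp _ _ _ hta, bv_comp _ _ _ hti]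
    have e2 : ∀ x, z a x - z a (t x) = z a c * (bv K c - bv K b) x := by
      intro x
      by_cases h1 : x = c
      · subst h1; simp [htc, hzae, bv, Ne.symm hbc]
      by_cases h2 : x = e
      · subst h2; simp [hte, hzae, hzab, bv, hec, heb]
      by_cases h3 : x = b
      · subst h3; simp [htb, hzab, bv, hbc]
      · simp [hto x h1 h2 h3, bv, h1, h3]
    have e3 : (fun x y => wdg (bv K a - bv K i) (z a) x y -
        wdg (bv K a - bv K i) (z a) (t x) (t y)) =
        z a c • wdg (bv K a - bv K i) (bv K c - bv K b) := by
      funext x y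
      have hx := e2 x
      have hy := e2 y
      simp only [wdg, Pi.smul_apply, smul_eq_mul, e1]
      linear_combination (bv K a - bv K i) x * hy - (bv K a - bv K i) y * hx
    rw [e3] at hm
    exact (N.smul_mem_iff (by rwa [hzac])).1 hm
  obtain ⟨q, h1, h2, h3, h4⟩ := trans4 hk a' b' c' d' a i c b hnd'
    (by simp only [List.nodup_cons, List.mem_cons, List.not_mem_nil, not_or, or_false]
        exact ⟨⟨Ne.symm hia, hac, hab⟩, ⟨hic, hib⟩, Ne.symm hbc, by simp, by simp⟩)
  have := hN q _ hz3
  rw [wdg_comp (q : Perm (Fin k)) _ _ (bv K a' - bv K b') (bv K c' - bv K d')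
    (fun x => by simp [bv_comp _ _ _ h1, bv_comp _ _ _ h2])
    (fun x => by simp [bv_comp _ _ _ h3, bv_comp _ _ _ h4])] at this
  exact this

lemma wdg_tri_mem (hk : 10 ≤ k) (h2 : (2 : K) ≠ 0) (N : Submodule K (Fin k → Fin k → K))
    (H : ∀ a b c d : Fin k, [a, b, c, d].Nodup →
      wdg (bv K a - bv K b) (bv K c - bv K d) ∈ N) (i j o : Fin k) :
    wdg (bv K i - bv K o) (bv K j - bv K o) ∈ N := by
  by_cases hij : i = j
  · subst hij
    have : wdg (bv K i - bv K o) (bv K i - bv K o) = 0 := by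
      funext x y; simp only [wdg, Pi.zero_apply]; ring
    rw [this]; exact N.zero_mem
  by_cases hio : i = o
  · subst hio
    have : wdg (bv K i - bv K i) (bv K j - bv K i) = 0 := by
      funext x y; simp [wdg]
    rw [this]; exact N.zero_mem
  by_cases hjo : j = o
  · subst hjo
    have : wdg (bv K i - bv K j) (bv K j - bv K j) = 0 := by
      funext x y; simp [wdg]
    rw [this]; exact N.zero_mem
  obtain ⟨d, hd⟩ := exists_fresh hk {i, j, o} (Finset.card_le_three.trans (by norm_num))
  simp only [Finset.mem_insert, Finset.mem_singleton, not_or] at hd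
  have e1 := H i o j d (by simp; grind)
  have e2 := H i j d o (by simp; grind)
  have e3 := H j o d i (by simp; grind)
  have := N.add_mem (N.add_mem e1 e2) e3
  refine (N.smul_mem_iff h2).1 ?_
  convert this using 1
  funext x y
  simp only [wdg, Pi.smul_apply, Pi.add_apply, Pi.sub_apply, smul_eq_mul]
  ring

lemma rowzero_mem (hk : 10 ≤ k) (h2 : (2 : K) ≠ 0) (N : Submodule K (Fin k → Fin k → K))
    (H : ∀ a b c d : Fin k, [a, b, c, d].Nodup →
      wdg (bv K a - bv K b) (bv K c - bv K d) ∈ N)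
    (v : Fin k → Fin k → K) (hanti : ∀ i j, v i j = - v j i) (hrow : ∀ i, ∑ j, v i j = 0) :
    v ∈ N := by
  let o : Fin k := ⟨0, by omega⟩
  have hcol : ∀ j, ∑ i, v i j = 0 := by
    intro j
    rw [← neg_eq_zero, ← Finset.sum_neg_distrib, ← hrow j]
    exact Finset.sum_congr rfl fun i _ => (hanti j i).symm
  have key : (2 : K) • v = ∑ i, ∑ j, v i j • wdg (bv K i - bv K o) (bv K j - bv K o) := by
    funext x y
    simp only [Pi.smul_apply, smul_eq_mul, Finset.sum_apply, wdg, Pi.sub_apply]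
    have expand : ∀ i j, v i j * ((bv K i x - bv K o x) * (bv K j y - bv K o y) -
        (bv K i y - bv K o y) * (bv K j x - bv K o x)) =
        v i j * bv K j y * bv K i x - v i j * bv K j x * bv K i y
        - v i j * (bv K i x * bv K o y - bv K i y * bv K o x)
        - v i j * bv K j y * bv K o x + v i j * bv K j x * bv K o y := by
      intro i j; ring
    simp only [expand, Finset.sum_sub_distrib, Finset.sum_add_distrib, ← Finset.sum_mul]
    have ev : ∀ i z, ∑ j, v i j * bv K j z = v i z := by intro i z; simp [bv]
    have ev2 : ∀ y z, ∑ i, v i y * bv K i z = v z y := by intro i z; simp [bv]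
    simp only [ev, ev2, hcol, hrow]
    rw [hanti y x]
    simp; ring
  rw [← N.smul_mem_iff h2, key]
  exact N.sum_mem fun i _ => N.sum_mem fun j _ => N.smul_mem _ (wdg_tri_mem hk h2 N H i j o)

lemma cocycle (hk : 10 ≤ k) (h2 : (2 : K) ≠ 0) (v : Fin k → Fin k → K)
    (hanti : ∀ i j, v i j = - v j i) 
    (H : ∀ a b c d : Fin k, [a, b, c, d].Nodup → v a c - v b c - v a d + v b d = 0)
    (i j o : Fin k) : v i j + v j o + v o i = 0 := by
  have h0 : ∀ i, v i i = 0 := by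
    intro i
    have := hanti i i
    have h3 : 2 * v i i = 0 := by linear_combination this
    exact (mul_eq_zero.1 h3).resolve_left h2
  by_cases hij : i = j
  · subst hij; rw [h0, hanti i o]; ring
  by_cases hio : i = o
  · subst hio; rw [h0, hanti i j]; ring
  by_cases hjo : j = o
  · subst hjo; rw [h0, hanti i j]; ring
  obtain ⟨d, hd⟩ := exists_fresh hk {i, j, o} (Finset.card_le_three.trans (by norm_num))
  simp only [Finset.mem_insert, Finset.mem_singleton, not_or] at hd
  have e1 := H i o j d (by simp; grind)
  have e2 := H i j d o (by simp; grind)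
  have e3 := H j o d i (by simp; grind)
  have h3 : 2 * (v i j + v j o + v o i) = 0 := by
    linear_combination e1 + e2 + e3 + hanti i j + hanti o j + hanti i o
  exact (mul_eq_zero.1 h3).resolve_left h2

end Core

section Bridge

variable {k : ℕ} {K : Type*} [Field K]

/-- An ordered pair from its components. -/
def mkOP (i j : Fin k) (h : i ≠ j) : OP k := ⟨(i, j), h⟩

/-- Extend a function on ordered pairs by zero on the diagonal. -/
def extE (k : ℕ) (K : Type*) [Field K] : (OP k → K) →ₗ[K] (Fin k → Fin k → K) where
  toFun v i j := if h : i ≠ j then v (mkOP i j h) else 0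
  map_add' v w := by
    funext i j; by_cases h : i = j <;> simp [h]
  map_smul' c v := by
    funext i j; by_cases h : i = j <;> simp [h]

/-- Restrict a matrix to the off-diagonal. -/
def resE (m : Fin k → Fin k → K) : OP k → K := fun q => m q.1.1 q.1.2

lemma extE_apply (v : OP k → K) (q : OP k) : extE k K v q.1.1 q.1.2 = v q := by
  have h := q.2
  show (if h : q.1.1 ≠ q.1.2 then v (mkOP q.1.1 q.1.2 h) else 0) = v q
  rw [dif_pos h]; rfl

lemma extE_apply' (v : OP k → K) {i j : Fin k} (h : i ≠ j) :
    extE k K v i j = v (mkOP i j h) := extE_apply v (mkOP i j h)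

lemma extE_diag (v : OP k → K) (i : Fin k) : extE k K v i i = 0 := by
  simp [extE]

lemma extE_inj : Function.Injective (extE k K) := by
  intro v w h
  funext q
  rw [← extE_apply v q, h, extE_apply]

lemma extE_resE (m : Fin k → Fin k → K) (h : ∀ i, m i i = 0) : extE k K (resE m) = m := by
  funext i j
  by_cases hij : i = j
  · subst hij; rw [extE_diag, h]
  · exact extE_apply (resE m) (mkOP i j hij)

lemma mem_antisym_iff (v : OP k → K) :
    v ∈ antisymSub k K ↔ ∀ i j, extE k K v i j = - extE k K v j i := by
  simp only [antisymSub, Submodule.mem_iInf, LinearMap.mem_ker, LinearMap.add_apply,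
    LinearMap.proj_apply]
  constructor
  · intro h i j
    by_cases hij : i = j
    · subst hij; rw [extE_diag, neg_zero]
    · have h1 := h (mkOP i j hij)
      rw [← extE_apply v (mkOP i j hij), ← extE_apply v (swapOP _)] at h1
      exact eq_neg_of_add_eq_zero_left h1
  · intro h q
    rw [← extE_apply v q, ← extE_apply v (swapOP q)]
    exact add_eq_zero_iff_eq_neg.2 (h q.1.1 q.1.2)

lemma sum_OP (f : OP k → K) : ∑ q, f q = ∑ i, ∑ j, extE k K f i j := by
  have h1 : ∑ q, f q = ∑ q : OP k, extE k K f q.1.1 q.1.2 :=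
    Finset.sum_congr rfl fun q _ => (extE_apply f q).symm
  rw [h1, ← Fintype.sum_prod_type' (f := fun i j => extE k K f i j)]
  refine Finset.sum_of_injOn (fun q : OP k => q.1) (fun a _ b _ h => Subtype.ext h)
    (fun _ _ => by simp) ?_ (fun _ _ => rfl)
  rintro ⟨i, j⟩ _ hij
  by_cases h : i = j
  · subst h; exact extE_diag f i
  · exact absurd ⟨mkOP i j h, Finset.mem_coe.2 (Finset.mem_univ _), rfl⟩ hij

/-- Row sums. -/
def bd (k : ℕ) (K : Type*) [Field K] : (OP k → K) →ₗ[K] (Fin k → K) where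
  toFun v i := ∑ j, extE k K v i j
  map_add' v w := by
    funext i; simp [Finset.sum_add_distrib]
  map_smul' c v := by
    funext i; simp [Finset.mul_sum]

/-- The coboundary map. -/
def dl (k : ℕ) (K : Type*) [Field K] : (Fin k → K) →ₗ[K] (OP k → K) where
  toFun x q := x q.1.1 - x q.1.2
  map_add' v w := by
    funext i; simp; ring
  map_smul' c v := by
    funext i; simp; ring

lemma bd_apply (v : OP k → K) (i : Fin k) : bd k K v i = ∑ j, extE k K v i j := rfl

lemma dl_apply (x : Fin k → K) (q : OP k) : dl k K x q = x q.1.1 - x q.1.2 := rfl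

lemma extE_dl (x : Fin k → K) : extE k K (dl k K x) = fun i j => x i - x j :=
  extE_resE (fun i j => x i - x j) (fun i => sub_self _)

lemma dl_antisym (x : Fin k → K) : dl k K x ∈ antisymSub k K := by
  rw [mem_antisym_iff, extE_dl]; intro i j; ring

lemma mem_rowZero_iff (v : OP k → K) : v ∈ rowZeroSub k K ↔ bd k K v = 0 := by
  simp only [rowZeroSub, Submodule.mem_iInf, LinearMap.mem_ker, LinearMap.sum_apply,
    LinearMap.proj_apply]
  rw [funext_iff]
  refine forall_congr' fun i => ?_
  rw [bd_apply, Pi.zero_apply]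
  have : ∑ q ∈ Finset.univ.filter (fun q : OP k => q.1.1 = i), v q = ∑ j, extE k K v i j := by
    rw [Finset.sum_filter, sum_OP, Finset.sum_eq_single i]
    · refine Finset.sum_congr rfl fun j _ => ?_
      simp [extE, mkOP]
    · intro b _ hb
      refine Finset.sum_eq_zero fun j _ => ?_
      simp [extE, mkOP, hb]
    · simp
  rw [this]

lemma mem_specht_iff (v : OP k → K) :
    v ∈ spechtHook k K ↔ v ∈ antisymSub k K ∧ bd k K v = 0 := by
  rw [spechtHook, Submodule.mem_inf, mem_rowZero_iff]

lemma mem_zeroSum_iff (x : Fin k → K) : x ∈ zeroSum k K ↔ ∑ i, x i = 0 := by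
  simp [zeroSum, sumFunctional]

lemma mem_constLine_iff (x : Fin k → K) : x ∈ constLine k K ↔ ∃ c, ∀ i, x i = c := by
  rw [constLine, Submodule.mem_span_singleton]
  refine exists_congr fun c => ?_
  rw [funext_iff]
  refine forall_congr' fun i => ?_
  simp [eq_comm]

lemma bd_dl (hk0 : (k : K) = 0) (x : Fin k → K) (i : Fin k) :
    bd k K (dl k K x) i = - ∑ j, x j := by
  rw [bd_apply, extE_dl]
  simp [hk0]

lemma bd_zeroSum (h2 : (2 : K) ≠ 0) (v : OP k → K) (hv : v ∈ antisymSub k K) :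
    bd k K v ∈ zeroSum k K := by
  rw [mem_zeroSum_iff]
  rw [mem_antisym_iff] at hv
  have h1 : ∑ i, bd k K v i = - ∑ i, bd k K v i := by
    simp only [bd_apply]
    conv_rhs => rw [Finset.sum_comm]
    simp only [← Finset.sum_neg_distrib]
    exact Finset.sum_congr rfl fun i _ => Finset.sum_congr rfl fun j _ => hv i j
  have h3 : 2 * ∑ i, bd k K v i = 0 := by linear_combination h1
  exact (mul_eq_zero.1 h3).resolve_left h2

lemma extE_wdg (f h : Fin k → K) : extE k K (resE (wdg f h)) = wdg f h :=
  extE_resE _ fun i => by simp only [wdg]; ring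

lemma wdg_antisym (f h : Fin k → K) : resE (wdg f h) ∈ antisymSub k K := by
  rw [mem_antisym_iff, extE_wdg]; intro i j; simp only [wdg]; ring

lemma bd_wdg (f h : Fin k → K) (i : Fin k) :
    bd k K (resE (wdg f h)) i = f i * (∑ j, h j) - (∑ j, f j) * h i := by
  rw [bd_apply, extE_wdg]
  simp only [wdg, Finset.sum_sub_distrib, Finset.mul_sum, Finset.sum_mul]

lemma sum_bv (a : Fin k) : ∑ i, bv K a i = 1 := by simp [bv]

lemma bd_surj (o : Fin k) (x : Fin k → K) (hx : x ∈ zeroSum k K) :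
    bd k K (resE (wdg x (bv K o))) = x := by
  rw [mem_zeroSum_iff] at hx
  funext i
  rw [bd_wdg, hx, sum_bv]; ring

/-- Shorthand for the representation on functions on ordered pairs. -/
abbrev rhoOP (k : ℕ) (K : Type*) [Field K] :=
  permRep K (alternatingGroup (Fin k)) (OP k)

/-- Shorthand for the representation on functions on points. -/
abbrev rhoF (k : ℕ) (K : Type*) [Field K] :=
  permRep K (alternatingGroup (Fin k)) (Fin k)

lemma extE_rho (g : alternatingGroup (Fin k)) (v : OP k → K) (i j : Fin k) :
    extE k K (rhoOP k K g v) i j =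
      extE k K v (((g⁻¹ : alternatingGroup (Fin k)) : Perm (Fin k)) i)
        (((g⁻¹ : alternatingGroup (Fin k)) : Perm (Fin k)) j) := by
  by_cases h : i = j
  · subst h; rw [extE_diag, extE_diag]
  · rw [extE_apply' _ h]
    exact (extE_apply v (g⁻¹ • mkOP i j h)).symm

lemma rhoF_apply (g : alternatingGroup (Fin k)) (x : Fin k → K) (i : Fin k) :
    rhoF k K g x i = x (((g⁻¹ : alternatingGroup (Fin k)) : Perm (Fin k)) i) := rfl

lemma bd_rho (g : alternatingGroup (Fin k)) (v : OP k → K) :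
    bd k K (rhoOP k K g v) = rhoF k K g (bd k K v) := by
  funext i
  rw [rhoF_apply, bd_apply, bd_apply]
  simp only [extE_rho]
  exact Equiv.sum_comp ((g⁻¹ : alternatingGroup (Fin k)) : Perm (Fin k))
    (fun j => extE k K v (((g⁻¹ : alternatingGroup (Fin k)) : Perm (Fin k)) i) j)

lemma dl_rho (g : alternatingGroup (Fin k)) (x : Fin k → K) :
    dl k K (rhoF k K g x) = rhoOP k K g (dl k K x) := rfl

lemma evenInv2_map (W : Submodule K (OP k → K)) (hW : InvSub (rhoOP k K) W) :
    EvenInv2 (W.map (extE k K)) := by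
  rintro g _ ⟨v, hv, rfl⟩
  refine ⟨rhoOP k K g⁻¹ v, hW _ _ hv, ?_⟩
  funext i j
  rw [extE_rho, inv_inv]

lemma evenInv1_map (W : Submodule K (OP k → K)) (hW : InvSub (rhoOP k K) W) :
    EvenInv1 (W.map (bd k K)) := by
  rintro g _ ⟨v, hv, rfl⟩
  refine ⟨rhoOP k K g⁻¹ v, hW _ _ hv, ?_⟩
  funext i
  rw [bd_rho, rhoF_apply, inv_inv]

lemma evenInv1_comap (W : Submodule K (OP k → K)) (hW : InvSub (rhoOP k K) W) :
    EvenInv1 (W.comap (dl k K)) := by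
  intro g x hx
  have := hW g⁻¹ _ hx
  rw [← dl_rho] at this
  have e : rhoF k K g⁻¹ x = fun i => x ((g : Perm (Fin k)) i) := by
    funext i; rw [rhoF_apply, inv_inv]
  rw [e] at this
  exact this

lemma cocycle_dl (hk : 10 ≤ k) (v : OP k → K) (hv : v ∈ antisymSub k K)
    (H : ∀ i j o, extE k K v i j + extE k K v j o + extE k K v o i = 0) :
    ∃ x, dl k K x = v := by
  let o : Fin k := ⟨0, by omega⟩
  rw [mem_antisym_iff] at hv
  refine ⟨fun i => extE k K v i o, ?_⟩
  funext q
  rw [dl_apply, ← extE_apply v q]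
  linear_combination - H q.1.1 q.1.2 o + hv o q.1.1

/-- Dichotomy for invariant submodules. -/
lemma dichotomy (hk : 10 ≤ k) (h2 : (2 : K) ≠ 0) (W : Submodule K (OP k → K))
    (hW : InvSub (rhoOP k K) W) (hWA : W ≤ antisymSub k K) :
    spechtHook k K ≤ W ∨ ∀ v ∈ W, ∃ x, dl k K x = v := by
  by_cases h : ∀ v ∈ W, ∀ a b c d : Fin k, [a, b, c, d].Nodup →
      extE k K v a c - extE k K v b c - extE k K v a d + extE k K v b d = 0
  · right
    intro v hv
    exact cocycle_dl hk v (hWA hv)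
      (cocycle hk h2 _ ((mem_antisym_iff v).1 (hWA hv)) (h v hv))
  · left
    push Not at h
    obtain ⟨v, hv, a, b, c, d, hnd, hne⟩ := h
    intro u hu
    rw [mem_specht_iff] at hu
    have : extE k K u ∈ W.map (extE k K) :=
      rowzero_mem hk h2 _ (disjoint_mem hk _ (evenInv2_map W hW) (extE k K v)
        (Submodule.mem_map_of_mem hv) ((mem_antisym_iff v).1 (hWA hv)) a b c d hnd hne)
        _ ((mem_antisym_iff u).1 hu.1) (fun i => congrFun hu.2 i)
    obtain ⟨w, hw, hwu⟩ := this
    rwa [← extE_inj hwu]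

/-- The socle. -/
noncomputable def Soc (k : ℕ) (K : Type*) [Field K] : Submodule K (OP k → K) :=
  (zeroSum k K).map (dl k K)

/-- The radical. -/
noncomputable def Rad (k : ℕ) (K : Type*) [Field K] : Submodule K (OP k → K) :=
  (constLine k K).comap (bd k K) ⊓ antisymSub k K

lemma Soc_le_specht (hk0 : (k : K) = 0) : Soc k K ≤ spechtHook k K := by
  rintro _ ⟨x, hx, rfl⟩
  rw [mem_specht_iff]
  refine ⟨dl_antisym x, ?_⟩
  funext i
  rw [bd_dl hk0, (mem_zeroSum_iff x).1 hx]; simp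

lemma Soc_le (hk : 10 ≤ k) (h2 : (2 : K) ≠ 0) (hk0 : (k : K) = 0)
    (W : Submodule K (OP k → K))
    (hW : InvSub (rhoOP k K) W) (hWA : W ≤ antisymSub k K) (hne : W ≠ ⊥) : Soc k K ≤ W := by
  rcases dichotomy hk h2 W hW hWA with h | h
  · exact (Soc_le_specht hk0).trans h
  · obtain ⟨v, hv, hv0⟩ := (Submodule.ne_bot_iff W).1 hne
    obtain ⟨x, rfl⟩ := h v hv
    have : ∃ q : OP k, dl k K x q ≠ 0 := by
      by_contra! hc; exact hv0 (funext hc)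
    obtain ⟨q, hq⟩ := this
    rw [dl_apply, sub_ne_zero] at hq
    rintro _ ⟨y, hy, rfl⟩
    exact nonconst_mem hk (W.comap (dl k K)) (evenInv1_comap W hW) x hv _ _ hq y
      ((mem_zeroSum_iff y).1 hy)

lemma le_Rad (hk : 10 ≤ k) (h2 : (2 : K) ≠ 0) (hk0 : (k : K) = 0)
    (W : Submodule K (OP k → K))
    (hW : InvSub (rhoOP k K) W) (hWA : W ≤ antisymSub k K) (hne : W ≠ antisymSub k K) :
    W ≤ Rad k K := by
  rcases dichotomy hk h2 W hW hWA with h | h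
  · by_contra hc
    obtain ⟨v, hv, hvR⟩ := Set.not_subset.1 hc
    have hnc : bd k K v ∉ constLine k K := fun h' => hvR ⟨h', hWA hv⟩
    rw [mem_constLine_iff] at hnc
    push Not at hnc
    obtain ⟨i, hi⟩ := hnc (bd k K v ⟨0, by omega⟩)
    apply hne
    refine le_antisymm hWA fun u hu => ?_
    obtain ⟨w, hw, hwu⟩ := nonconst_mem hk (W.map (bd k K)) (evenInv1_map W hW) (bd k K v)
      (Submodule.mem_map_of_mem hv) _ _ hi (bd k K u)
      ((mem_zeroSum_iff _).1 (bd_zeroSum h2 u hu))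
    have : u - w ∈ W := h ((mem_specht_iff _).2
      ⟨Submodule.sub_mem _ hu (hWA hw), by rw [map_sub, hwu, sub_self]⟩)
    simpa using W.add_mem this hw
  · intro v hv
    refine ⟨?_, hWA hv⟩
    obtain ⟨x, rfl⟩ := h v hv
    exact (mem_constLine_iff _).2 ⟨_, fun i => bd_dl hk0 x i⟩

lemma Soc_inv : InvSub (rhoOP k K) (Soc k K) := by
  rintro g _ ⟨x, hx, rfl⟩
  exact ⟨rhoF k K g x, zeroSum_inv_alt k K g x hx, rfl⟩

lemma constLine_inv (g : alternatingGroup (Fin k)) (x : Fin k → K) (hx : x ∈ constLine k K) :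
    rhoF k K g x = x := by
  obtain ⟨c, hc⟩ := (mem_constLine_iff x).1 hx
  funext i
  rw [rhoF_apply, hc, hc]

lemma Rad_inv : InvSub (rhoOP k K) (Rad k K) := by
  rintro g v ⟨h1, h2⟩
  refine ⟨?_, antisym_inv_alt k K g v h2⟩
  show bd k K _ ∈ constLine k K
  rw [bd_rho, constLine_inv g _ h1]
  exact h1

lemma bv_sub_zeroSum (a b : Fin k) : bv K a - bv K b ∈ zeroSum k K := by
  rw [mem_zeroSum_iff]; simp [sum_bv]

lemma Rad_ne (hk : 10 ≤ k) : Rad k K ≠ antisymSub k K := by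
  intro h
  let a : Fin k := ⟨0, by omega⟩
  let b : Fin k := ⟨1, by omega⟩
  let c : Fin k := ⟨2, by omega⟩
  have h1 : resE (wdg (bv K a - bv K b) (bv K c)) ∈ Rad k K := h ▸ wdg_antisym _ _
  have h2 : bd k K _ ∈ constLine k K := h1.1
  rw [bd_surj c _ (bv_sub_zeroSum a b)] at h2
  obtain ⟨t, ht⟩ := (mem_constLine_iff _).1 h2
  have e1 := ht a
  have e2 := ht c
  have hab : a ≠ b := by simp [a, b]
  have hca : c ≠ a := by simp [a, c]
  have hcb : c ≠ b := by simp [c, b]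
  simp [bv, hab] at e1
  simp [bv, hca, hcb] at e2
  rw [← e2] at e1
  exact one_ne_zero e1

lemma Soc_ne_bot (hk : 10 ≤ k) : Soc k K ≠ ⊥ := by
  let a : Fin k := ⟨0, by omega⟩
  let b : Fin k := ⟨1, by omega⟩
  let c : Fin k := ⟨2, by omega⟩
  have hab : a ≠ b := by simp [a, b]
  have hca : c ≠ a := by simp [a, c]
  have hcb : c ≠ b := by simp [c, b]
  intro h
  have h1 : dl k K (bv K a - bv K b) ∈ Soc k K :=
    Submodule.mem_map_of_mem (bv_sub_zeroSum a b)
  rw [h, Submodule.mem_bot] at h1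
  have := congrFun h1 (mkOP a c hca.symm)
  rw [dl_apply] at this
  simp [mkOP, bv, hab, hca, hcb] at this

lemma Soc_le_antisym : Soc k K ≤ antisymSub k K := by
  rintro _ ⟨x, hx, rfl⟩
  exact dl_antisym x

lemma socIn_eq (hk : 10 ≤ k) (h2 : (2 : K) ≠ 0) (hk0 : (k : K) = 0) :
    socIn (rhoOP k K) (antisymSub k K) = Soc k K := by
  apply le_antisymm
  · refine sSup_le ?_
    rintro U ⟨hUA, hU, hU0, hmin⟩
    have := Soc_le hk h2 hk0 U hU hUA hU0
    rcases hmin _ this Soc_inv with h | h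
    · exact absurd h (Soc_ne_bot hk)
    · exact h.ge
  · refine le_sSup ⟨Soc_le_antisym, Soc_inv, Soc_ne_bot hk, ?_⟩
    intro W hW hWi
    by_cases h : W = ⊥
    · exact Or.inl h
    · exact Or.inr (le_antisymm hW (Soc_le hk h2 hk0 W hWi (hW.trans Soc_le_antisym) h))

lemma radIn_eq (hk : 10 ≤ k) (h2 : (2 : K) ≠ 0) (hk0 : (k : K) = 0) :
    radIn (rhoOP k K) (antisymSub k K) = Rad k K := by
  apply le_antisymm
  · refine sInf_le ⟨inf_le_right, Rad_inv, Rad_ne hk, ?_⟩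
    intro W hRW hWA hW
    by_cases h : W = antisymSub k K
    · exact Or.inr h
    · exact Or.inl (le_antisymm (le_Rad hk h2 hk0 W hW hWA h) hRW)
  · refine le_sInf ?_
    rintro U ⟨hUA, hU, hne, hmax⟩
    rcases hmax _ (le_Rad hk h2 hk0 U hU hUA hne) inf_le_right Rad_inv with h | h
    · exact h.le
    · exact absurd h (Rad_ne hk)

lemma mem_perp_iff (U : Submodule K (OP k → K)) (v : OP k → K) :
    v ∈ perpSub K U ↔ ∀ w ∈ U, ∑ i, ∑ j, extE k K w i j * extE k K v i j = 0 := by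
  rw [perpSub, Submodule.mem_iInf, Subtype.forall]
  refine forall₂_congr fun w hw => ?_
  simp only [LinearMap.mem_ker, formMap, LinearMap.sum_apply,
      LinearMap.smul_apply, LinearMap.proj_apply, smul_eq_mul]
  rw [sum_OP]
  have : ∀ i j, extE k K (fun q => w q * v q) i j = extE k K w i j * extE k K v i j := by
    intro i j
    by_cases h : i = j <;> simp [extE, h]
  simp only [this]

lemma perp_eq (hk : 10 ≤ k) (h2 : (2 : K) ≠ 0) (hk0 : (k : K) = 0) :
    spechtHook k K ⊓ perpSub K (spechtHook k K) = Soc k K := by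
  apply le_antisymm
  · rintro v ⟨hv, hperp⟩
    rw [SetLike.mem_coe, mem_perp_iff] at hperp
    have hv' := (mem_specht_iff v).1 hv
    have ha := (mem_antisym_iff v).1 hv'.1
    obtain ⟨x, rfl⟩ := cocycle_dl hk v hv'.1 (by
      intro i j o
      have hm : resE (wdg (bv K i - bv K o) (bv K j - bv K o)) ∈ spechtHook k K := by
        refine (mem_specht_iff _).2 ⟨wdg_antisym _ _, ?_⟩
        funext l
        rw [bd_wdg, (mem_zeroSum_iff _).1 (bv_sub_zeroSum i o),
          (mem_zeroSum_iff _).1 (bv_sub_zeroSum j o)]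
        simp
      have h3 := hperp _ hm
      rw [extE_wdg] at h3
      set m := extE k K v with hmdef
      have expand : ∀ a b, wdg (bv K i - bv K o) (bv K j - bv K o) a b * m a b =
          bv K i a * (bv K j b * m a b) - bv K i a * (bv K o b * m a b)
          - bv K o a * (bv K j b * m a b)
          - bv K j a * (bv K i b * m a b) + bv K o a * (bv K i b * m a b)
          + bv K j a * (bv K o b * m a b) := by
        intro a b; simp only [wdg, Pi.sub_apply]; ring
      simp only [expand, Finset.sum_add_distrib, Finset.sum_sub_distrib, ← Finset.mul_sum] at h3
      have ev : ∀ (f : Fin k → K) z, ∑ j, bv K z j * f j = f z := by intro f z; simp [bv]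
      simp only [ev] at h3
      have h4 : 2 * (m i j + m j o + m o i) = 0 := by
        linear_combination h3 + ha i j + ha o j + ha i o
      exact (mul_eq_zero.1 h4).resolve_left h2)
    refine Submodule.mem_map_of_mem ?_
    rw [mem_zeroSum_iff]
    have := congrFun hv'.2 ⟨0, by omega⟩
    rw [bd_dl hk0] at this
    simpa using this
  · refine le_inf (Soc_le_specht hk0) ?_
    rintro _ ⟨x, hx, rfl⟩
    rw [mem_perp_iff]
    intro w hw
    have hw' := (mem_specht_iff w).1 hw
    have ha := (mem_antisym_iff w).1 hw'.1
    have hr : ∀ i, ∑ j, extE k K w i j = 0 := fun i => congrFun hw'.2 i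
    have hc : ∀ j, ∑ i, extE k K w i j = 0 := by
      intro j
      rw [← neg_eq_zero, ← Finset.sum_neg_distrib, ← hr j]
      exact Finset.sum_congr rfl fun i _ => (ha j i).symm
    rw [extE_dl]
    simp only [mul_sub, Finset.sum_sub_distrib]
    conv_lhs => arg 2; rw [Finset.sum_comm]
    simp only [← Finset.sum_mul, hr, hc]
    simp

end Bridge

section Parts

variable {k p : ℕ} [Fact p.Prime]

lemma part_soc (hk : 10 ≤ k) : ∃ ψ : Dk11 k p →ₗ[ZMod p] (OP k → ZMod p),
      Function.Injective ψ ∧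
      LinearMap.range ψ = Soc k (ZMod p) ∧
      ∀ (g : alternatingGroup (Fin k)) (x : Dk11 k p),
        ψ (Dk11Rep k p g x)
          = permRep (ZMod p) (alternatingGroup (Fin k)) (OP k) g (ψ x) := by
  let C := (constLine k (ZMod p)).comap (zeroSum k (ZMod p)).subtype
  let d : zeroSum k (ZMod p) →ₗ[ZMod p] (OP k → ZMod p) :=
    (dl k (ZMod p)).comp (zeroSum k (ZMod p)).subtype
  have hC : C = LinearMap.ker d := by
    ext x
    rw [LinearMap.mem_ker, Submodule.mem_comap, mem_constLine_iff]
    constructor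
    · rintro ⟨c, hc⟩
      funext q
      show x.1 q.1.1 - x.1 q.1.2 = 0
      have h1 : x.1 q.1.1 = c := hc _
      have h2 : x.1 q.1.2 = c := hc _
      rw [h1, h2, sub_self]
    · intro h
      refine ⟨x.1 ⟨0, by omega⟩, fun i => ?_⟩
      show x.1 i = _
      by_cases hi : i = ⟨0, by omega⟩
      · rw [hi]
      · have : x.1 i - x.1 ⟨0, by omega⟩ = 0 := congrFun h (mkOP i _ hi)
        exact sub_eq_zero.1 this
  let ψ : (zeroSum k (ZMod p) ⧸ C) →ₗ[ZMod p] (OP k → ZMod p) := C.liftQ d hC.le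
  refine ⟨ψ, ?_, ?_, ?_⟩
  · have : LinearMap.ker ψ = ⊥ := Submodule.ker_liftQ_eq_bot C d hC.le hC.ge
    exact LinearMap.ker_eq_bot.1 this
  · have : LinearMap.range ψ = LinearMap.range d := Submodule.range_liftQ C d hC.le
    refine Eq.trans this ?_
    rw [LinearMap.range_comp, Submodule.range_subtype]
    rfl
  · intro g x
    obtain ⟨y, rfl⟩ := Submodule.mkQ_surjective C x
    rfl

lemma part_head (h2 : (2 : ZMod p) ≠ 0) :
    ∃ φ : (OP k → ZMod p) →ₗ[ZMod p] Dk11 k p,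
      (antisymSub k (ZMod p)).map φ = ⊤ ∧
      LinearMap.ker φ ⊓ antisymSub k (ZMod p) = Rad k (ZMod p) ∧
      ∀ (g : alternatingGroup (Fin k)) (v : OP k → ZMod p), v ∈ antisymSub k (ZMod p) →
        φ (permRep (ZMod p) (alternatingGroup (Fin k)) (OP k) g v) = Dk11Rep k p g (φ v) := by
  let C := (constLine k (ZMod p)).comap (zeroSum k (ZMod p)).subtype
  let f : antisymSub k (ZMod p) →ₗ[ZMod p] zeroSum k (ZMod p) :=
    ((bd k (ZMod p)).comp (antisymSub k (ZMod p)).subtype).codRestrict _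
      (fun v => bd_zeroSum h2 v.1 v.2)
  obtain ⟨φ, hφ⟩ : ∃ φ : (OP k → ZMod p) →ₗ[ZMod p] (zeroSum k (ZMod p) ⧸ C),
      φ.comp (antisymSub k (ZMod p)).subtype = C.mkQ.comp f := LinearMap.exists_extend _
  have hφ' : ∀ v (hv : v ∈ antisymSub k (ZMod p)), φ v = C.mkQ (f ⟨v, hv⟩) :=
    fun v hv => LinearMap.congr_fun hφ ⟨v, hv⟩
  refine ⟨φ, ?_, ?_, ?_⟩
  · refine eq_top_iff.2 ?_
    rintro x -
    obtain ⟨y, rfl⟩ := Submodule.mkQ_surjective C x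
    rcases Nat.eq_zero_or_pos k with hk | hk
    · subst hk
      refine ⟨0, Submodule.zero_mem _, ?_⟩
      have : y = 0 := Subsingleton.elim _ _
      rw [this]
      exact (map_zero φ).trans (map_zero C.mkQ).symm
    let o : Fin k := ⟨0, hk⟩
    refine ⟨resE (wdg y.1 (bv _ o)), wdg_antisym _ _, ?_⟩
    refine (hφ' _ (wdg_antisym _ _)).trans ?_
    congr 1
    exact Subtype.ext (bd_surj o y.1 y.2)
  · ext v
    rw [Submodule.mem_inf]
    have key : ∀ hv : v ∈ antisymSub k (ZMod p),
        φ v = 0 ↔ bd k (ZMod p) v ∈ constLine k (ZMod p) := by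
      intro hv
      rw [hφ' v hv, Submodule.mkQ_apply, Submodule.Quotient.mk_eq_zero]
      rfl
    constructor
    · rintro ⟨h1, hv⟩
      exact ⟨(key hv).1 h1, hv⟩
    · rintro ⟨h1, hv⟩
      exact ⟨(key hv).2 h1, hv⟩
  · intro g v hv
    have hgv := antisym_inv_alt k (ZMod p) g v hv
    have e1 := hφ' _ hgv
    have e2 : f ⟨_, hgv⟩ = subRep (permRep (ZMod p) (alternatingGroup (Fin k)) (Fin k))
        (zeroSum k (ZMod p)) (zeroSum_inv_alt k (ZMod p)) g (f ⟨v, hv⟩) :=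
      Subtype.ext (bd_rho g v)
    rw [e2] at e1
    refine e1.trans ?_
    show Dk11Rep k p g (C.mkQ (f ⟨v, hv⟩)) = _
    exact congrArg (Dk11Rep k p g) (hφ' v hv).symm

lemma part_mid (hk : 10 ≤ k) (h2 : (2 : ZMod p) ≠ 0) (hk0 : (k : ZMod p) = 0) :
    ∃ (φ₁ : (OP k → ZMod p) →ₗ[ZMod p] ZMod p)
       (φ₂ : (OP k → ZMod p) →ₗ[ZMod p] Dk211 k p),
      (∀ (g : alternatingGroup (Fin k)) (v : OP k → ZMod p),
        v ∈ Rad k (ZMod p) →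
        φ₁ (permRep (ZMod p) (alternatingGroup (Fin k)) (OP k) g v) = φ₁ v ∧
        φ₂ (permRep (ZMod p) (alternatingGroup (Fin k)) (OP k) g v)
          = Dk211Rep k p g (φ₂ v)) ∧
      (Rad k (ZMod p)).map (φ₁.prod φ₂) = ⊤ ∧
      LinearMap.ker (φ₁.prod φ₂) ⊓ Rad k (ZMod p) = Soc k (ZMod p) := by
  let K := ZMod p
  let o : Fin k := ⟨0, by omega⟩
  let C := (spechtHook k K ⊓ perpSub K (spechtHook k K)).comap (spechtHook k K).subtype
  have hC : ∀ v, v ∈ C ↔ v.1 ∈ Soc k K := by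
    intro v
    rw [← perp_eq hk h2 hk0]; rfl
  let φ₁ : (OP k → K) →ₗ[K] K := (LinearMap.proj o).comp (bd k K)
  have hφ₁ : ∀ v, φ₁ v = bd k K v o := fun v => rfl
  let E : OP k → K := dl k K (bv K o)
  have hbE : ∀ i, bd k K E i = -1 := fun i => by rw [bd_dl hk0, sum_bv]
  let T : (OP k → K) →ₗ[K] (OP k → K) := LinearMap.id + φ₁.smulRight E
  have hT : ∀ v, T v = v + bd k K v o • E := fun v => rfl
  have hRc : ∀ v ∈ Rad k K, ∀ i, bd k K v i = bd k K v o := by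
    intro v hv i
    obtain ⟨c, hc⟩ := (mem_constLine_iff _).1 hv.1
    rw [hc, hc]
  have hTm : ∀ v ∈ Rad k K, T v ∈ spechtHook k K := by
    intro v hv
    rw [mem_specht_iff, hT]
    refine ⟨Submodule.add_mem _ hv.2 (Submodule.smul_mem _ _ (dl_antisym _)), ?_⟩
    funext i
    rw [map_add, map_smul, Pi.add_apply, Pi.smul_apply, hbE, hRc v hv i]
    show bd k K v o + bd k K v o * (-1) = 0
    ring
  let f : Rad k K →ₗ[K] spechtHook k K :=
    (T.comp (Rad k K).subtype).codRestrict _ (fun v => hTm v.1 v.2)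
  obtain ⟨φ₂, hφ⟩ : ∃ φ : (OP k → K) →ₗ[K] (spechtHook k K ⧸ C),
      φ.comp (Rad k K).subtype = C.mkQ.comp f := LinearMap.exists_extend _
  have hφ' : ∀ v (hv : v ∈ Rad k K), φ₂ v = C.mkQ (f ⟨v, hv⟩) :=
    fun v hv => LinearMap.congr_fun hφ ⟨v, hv⟩
  refine ⟨φ₁, φ₂, ?_, ?_, ?_⟩
  · intro g v hv
    have hgv := Rad_inv g v hv
    have hb : bd k K (rhoOP k K g v) = bd k K v := by
      rw [bd_rho, constLine_inv g _ hv.1]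
    refine ⟨congrFun hb o, ?_⟩
    have e1 := hφ' _ hgv
    have e2 : C.mkQ (f ⟨_, hgv⟩) = C.mkQ (subRep (permRep K (alternatingGroup (Fin k)) (OP k))
        (spechtHook k K) (spechtHook_inv_alt k K) g (f ⟨v, hv⟩)) := by
      rw [← sub_eq_zero, ← map_sub, Submodule.mkQ_apply, Submodule.Quotient.mk_eq_zero, hC]
      show T (rhoOP k K g v) - rhoOP k K g (T v) ∈ Soc k K
      rw [hT, hT, hb, map_add, map_smul, add_sub_add_left_eq_sub, ← smul_sub]
      refine Submodule.smul_mem _ _ ?_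
      have e3 : E - rhoOP k K g E = dl k K (bv K o - rhoF k K g (bv K o)) := by
        rw [map_sub, dl_rho]
      rw [e3]
      refine Submodule.mem_map_of_mem ?_
      rw [mem_zeroSum_iff]
      simp only [Pi.sub_apply, Finset.sum_sub_distrib, rhoF_apply]
      rw [Equiv.sum_comp ((g⁻¹ : alternatingGroup (Fin k)) : Perm (Fin k)) (bv K o), sub_self]
    refine e1.trans (e2.trans ?_)
    show Dk211Rep k p g (C.mkQ (f ⟨v, hv⟩)) = _
    exact congrArg (Dk211Rep k p g) (hφ' v hv).symm
  · refine eq_top_iff.2 ?_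
    rintro ⟨c, x⟩ -
    obtain ⟨u, rfl⟩ := Submodule.mkQ_surjective C x
    have hu := (mem_specht_iff u.1).1 u.2
    have hb : ∀ i, bd k K (u.1 - c • E) i = c := by
      intro i
      rw [map_sub, map_smul, Pi.sub_apply, Pi.smul_apply, hbE, hu.2]
      simp
    have hm : u.1 - c • E ∈ Rad k K :=
      ⟨(mem_constLine_iff _).2 ⟨c, hb⟩,
        Submodule.sub_mem _ hu.1 (Submodule.smul_mem _ _ (dl_antisym _))⟩
    refine ⟨u.1 - c • E, hm, ?_⟩
    refine Prod.ext (hb o) ?_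
    refine (hφ' _ hm).trans ?_
    congr 1
    refine Subtype.ext ?_
    show T (u.1 - c • E) = u.1
    rw [hT, hb, sub_add_cancel]
  · have key : ∀ v (hv : v ∈ Rad k K), φ₂ v = 0 ↔ T v ∈ Soc k K := by
      intro v hv
      rw [hφ' v hv, Submodule.mkQ_apply, Submodule.Quotient.mk_eq_zero, hC]
      rfl
    ext v
    rw [Submodule.mem_inf]
    constructor
    · rintro ⟨h1, hv⟩
      have h3 : φ₁ v = 0 := congrArg Prod.fst (LinearMap.mem_ker.1 h1)
      have h4 : φ₂ v = 0 := congrArg Prod.snd (LinearMap.mem_ker.1 h1)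
      have h5 := (key v hv).1 h4
      rw [hT, ← hφ₁, h3, zero_smul, add_zero] at h5
      exact h5
    · intro hv
      have hs := (mem_specht_iff v).1 (Soc_le_specht hk0 hv)
      have hR : v ∈ Rad k K :=
        ⟨(mem_constLine_iff _).2 ⟨0, fun i => by rw [hs.2]; rfl⟩, hs.1⟩
      have h3 : φ₁ v = 0 := by rw [hφ₁, hs.2]; rfl
      refine ⟨LinearMap.mem_ker.2 (Prod.ext h3 ((key v hR).2 ?_)), hR⟩
      rw [hT, ← hφ₁, h3, zero_smul, add_zero]
      exact hv

end Parts

/-- **(Guralnick–Liebeck, Lemma 3.2(i).)** Let `p` be an odd prime dividing `k`,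
`k ≥ 10`, `G = A_k`, `Y ≅ S_{k-2}` the stabilizer of `{1,2}`, and `θ` the nontrivial
1-dimensional `𝔽_p Y`-module. The induced module `θ↑_Y^G` (realized as the module of
antisymmetric functions on ordered pairs of distinct points) has socle and head both
isomorphic to `L = D^(k-1,1)`, and its maximal submodule (the radical) modulo its socle
is isomorphic to `𝔽_p ⊕ D^(k-2,1,1)`. -/
theorem induced_module_structure (k p : ℕ) (hk : 10 ≤ k) (hp : p.Prime) [Fact p.Prime]
    (hodd : Odd p) (hdvd : p ∣ k) :
    -- the socle of `θ↑_Y^G` is isomorphic to `L`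
    (∃ ψ : Dk11 k p →ₗ[ZMod p] (OP k → ZMod p),
      Function.Injective ψ ∧
      LinearMap.range ψ =
        socIn (permRep (ZMod p) (alternatingGroup (Fin k)) (OP k)) (antisymSub k (ZMod p)) ∧
      ∀ (g : alternatingGroup (Fin k)) (x : Dk11 k p),
        ψ (Dk11Rep k p g x)
          = permRep (ZMod p) (alternatingGroup (Fin k)) (OP k) g (ψ x)) ∧
    -- the head of `θ↑_Y^G` is isomorphic to `L`
    (∃ φ : (OP k → ZMod p) →ₗ[ZMod p] Dk11 k p,
      (antisymSub k (ZMod p)).map φ = ⊤ ∧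
      LinearMap.ker φ ⊓ antisymSub k (ZMod p) =
        radIn (permRep (ZMod p) (alternatingGroup (Fin k)) (OP k)) (antisymSub k (ZMod p)) ∧
      ∀ (g : alternatingGroup (Fin k)) (v : OP k → ZMod p), v ∈ antisymSub k (ZMod p) →
        φ (permRep (ZMod p) (alternatingGroup (Fin k)) (OP k) g v) = Dk11Rep k p g (φ v)) ∧
    -- the maximal submodule (radical) modulo the socle is isomorphic to `𝔽_p ⊕ D`
    (∃ (φ₁ : (OP k → ZMod p) →ₗ[ZMod p] ZMod p)
       (φ₂ : (OP k → ZMod p) →ₗ[ZMod p] Dk211 k p),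
      (∀ (g : alternatingGroup (Fin k)) (v : OP k → ZMod p),
        v ∈ radIn (permRep (ZMod p) (alternatingGroup (Fin k)) (OP k))
              (antisymSub k (ZMod p)) →
        φ₁ (permRep (ZMod p) (alternatingGroup (Fin k)) (OP k) g v) = φ₁ v ∧
        φ₂ (permRep (ZMod p) (alternatingGroup (Fin k)) (OP k) g v)
          = Dk211Rep k p g (φ₂ v)) ∧
      (radIn (permRep (ZMod p) (alternatingGroup (Fin k)) (OP k))
          (antisymSub k (ZMod p))).map (φ₁.prod φ₂) = ⊤ ∧
      LinearMap.ker (φ₁.prod φ₂) ⊓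
          radIn (permRep (ZMod p) (alternatingGroup (Fin k)) (OP k))
            (antisymSub k (ZMod p)) =
        socIn (permRep (ZMod p) (alternatingGroup (Fin k)) (OP k))
          (antisymSub k (ZMod p))) := by
  have h2 : (2 : ZMod p) ≠ 0 := by
    intro h
    have h3 : ((2 : ℕ) : ZMod p) = 0 := by exact_mod_cast h
    rw [ZMod.natCast_eq_zero_iff] at h3
    have := (Nat.prime_dvd_prime_iff_eq hp Nat.prime_two).1 h3
    subst this
    exact absurd hodd (by decide)
  have hk0 : (k : ZMod p) = 0 := (ZMod.natCast_eq_zero_iff k p).2 hdvd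
  rw [socIn_eq hk h2 hk0, radIn_eq hk h2 hk0]
  exact ⟨part_soc hk, part_head h2, part_mid hk h2 hk0⟩
end
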